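/- arXiv:2202.09295 — 3 statements merged into one kernel-verified Lean document; each statement's English description precedes it below -/
import Mathlib

section
/- Let Ω ⊆ ℝⁿ be open, equipped with the Euclidean distance, let w ∈ C¹(Ω) be nonnegative, and set μ := w·𝓛ⁿ restricted to Ω; assume μ(B) > 0 for every open Euclidean ball B ⊆ Ω, so that (Ω,d_e,μ) is a metric measure space. Let x ∈ Ω with w(x) > 0. Then every u ∈ C²(Ω) admits pointwise AMV and SAMV Laplacians at x, given by: Δ_μ u(x) = (1/(2(n+2)))·(Δu(x) + 2⟨∇ln w(x), ∇u(x)⟩) and Δ̃_μ u(x) = (1/(2(n+2)))·(Δu(x) + ⟨∇ln w(x), ∇u(x)⟩), where Δ denotes the classical Laplacian on ℝⁿ. -/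
/-!
Write `f h = u (x + h) - u x` and `g h = w (x + h)`, and let `𝔹` be the unit ball. Substituting
`y = x + r z`, with `M r z = ∫_𝔹 g (r (z + v)) dv`, one has `μ (B_r (x + r z)) = r ^ n M r z`, so the
AMV operator is

  `M(r,0)⁻¹ ∫_𝔹 f (r z) g (r z) / r² dz`.

Subtracting the odd function `g 0 * a z / r`, where `a = Du(x)`, `b = Dw(x)`, `H = D²u(x)`, does not
change this integral and leaves the bounded integrand
`(f (r z) - a (r z)) / r² * g (r z) + a z * (g (r z) - g 0) / r`, which tends to
`H z z / 2 * g 0 + a z * b z` by Taylor's formula (`taylor2`). Dominated convergence (`dct`) and the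
second moments `∫_𝔹 zᵢ zⱼ = δᵢⱼ |𝔹| / (n + 2)` (`int_coord`) give the AMV Laplacian.

For the SAMV operator, `1 + M(r,0) / M(r,z) = 2 + (M(r,0) - M(r,z)) / M(r,z)`, and
`(M(r,0) - M(r,z)) / r → -|𝔹| b z` boundedly. The second summand therefore adds
`-(1/2) (g 0 |𝔹|)⁻¹ ∫_𝔹 a z * b z` to the AMV limit (`Setup.tendsto_corr`), which removes half of the
drift term.
-/

open MeasureTheory Filter Metric Set
open scoped ENNReal Topology RealInnerProductSpace

/-- The classical Laplacian of `u : ℝⁿ → ℝ` at `x`, as the trace of the Hessian computed in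
the standard orthonormal coordinates. -/
noncomputable def eucLap {n : ℕ} (u : EuclideanSpace ℝ (Fin n) → ℝ)
    (x : EuclideanSpace ℝ (Fin n)) : ℝ :=
  ∑ i : Fin n, iteratedFDeriv ℝ 2 u x ![EuclideanSpace.single i 1, EuclideanSpace.single i 1]

section

/-! ### Second-order Taylor expansion -/

variable {n : ℕ}
local notation "E" => EuclideanSpace ℝ (Fin n)

/-- Second-order Taylor formula with Peano remainder: by symmetry of the second derivative, the
derivative of the remainder at `h` is `Du(x + h) - Du(x) - D²u(x) h = o(h)`, and the mean value
inequality on the closed ball of radius `‖h‖` concludes. -/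
theorem taylor2 (u : E → ℝ) (x : E) (hu : ContDiffAt ℝ 2 u x) :
    (fun h => u (x + h) - u x - fderiv ℝ u x h - fderiv ℝ (fderiv ℝ u) x h h / 2)
      =o[𝓝 0] fun h => ‖h‖ ^ 2 := by
  have hsymm : ∀ v z, fderiv ℝ (fderiv ℝ u) x v z = fderiv ℝ (fderiv ℝ u) x z v :=
    hu.isSymmSndFDerivAt (by simp)
  have hd : DifferentiableAt ℝ (fderiv ℝ u) x :=
    (hu.fderiv_right (m := 1) (by norm_num)).differentiableAt (by norm_num)
  have hev : ∀ᶠ y in 𝓝 x, DifferentiableAt ℝ u y := by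
    filter_upwards [hu.eventually (by simp)] with y hy using hy.differentiableAt (by norm_num)
  set A := fderiv ℝ (fderiv ℝ u) x with hA
  rw [Asymptotics.isLittleO_iff]
  intro c hc
  have h1 := (Asymptotics.isLittleO_iff.1 hd.hasFDerivAt.isLittleO) hc
  obtain ⟨δ, hδ, hb⟩ := Metric.eventually_nhds_iff_ball.1 (h1.and hev)
  filter_upwards [ball_mem_nhds 0 hδ] with h hh
  have hh' : ‖h‖ < δ := by simpa using hh
  have key : ∀ k ∈ closedBall (0 : E) ‖h‖, HasFDerivWithinAt
      (fun h => u (x + h) - u x - fderiv ℝ u x h - A h h / 2)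
      (fderiv ℝ u (x + k) - fderiv ℝ u x - A k) (closedBall (0 : E) ‖h‖) k := by
    intro k hk
    have hk' : ‖k‖ ≤ ‖h‖ := by simpa using hk
    have d1 : HasFDerivAt (fun h => u (x + h)) (fderiv ℝ u (x + k)) k := by
      have : HasFDerivAt u (fderiv ℝ u (x + k)) (x + k) := by
        apply (hb (x + k) (by simpa using lt_of_le_of_lt hk' hh')).2.hasFDerivAt
      exact (hasFDerivAt_comp_add_left x).2 this
    have d2 : HasFDerivAt (fun h => A h h / 2) (A k) k := by
      have h0 := ((A.hasFDerivAt (x := k)).clm_apply (hasFDerivAt_id k)).mul_const (1 / 2 : ℝ)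
      have e1 : (fun h => A h h / 2) = fun y => A y (id y) * (1 / 2) := by
        ext; simp; ring
      have e2 : A k = (1 / 2 : ℝ) • (A k ∘SL ContinuousLinearMap.id ℝ E + A.flip (id k)) := by
        ext v; simp [hsymm _ k]; ring
      rw [e1, e2]; exact h0
    exact (((d1.sub_const _).sub (fderiv ℝ u x).hasFDerivAt).sub d2).hasFDerivWithinAt
  have := Convex.norm_image_sub_le_of_norm_hasFDerivWithin_le (C := c * ‖h‖) (x := 0) (y := h) key ?_ (convex_closedBall _ _)
    (by simp) (by simp)
  · simpa [pow_two, mul_assoc] using this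
  · intro k hk
    have hk' : ‖k‖ ≤ ‖h‖ := by simpa using hk
    have := (hb (x + k) (by simpa using lt_of_le_of_lt hk' hh')).1
    simp only [add_sub_cancel_left] at this
    exact this.trans (by gcongr)

/-! ### Moments of the unit ball -/

theorem single_flip (i : Fin n) : ∃ e : E ≃ₗᵢ[ℝ] E, ∀ z k, (e z) k = if k = i then - z k else z k := by
  refine ⟨LinearIsometryEquiv.piLpCongrRight 2 (fun k => if k = i then LinearIsometryEquiv.neg ℝ else LinearIsometryEquiv.refl ℝ ℝ), fun z k => ?_⟩
  simp [LinearIsometryEquiv.piLpCongrRight_apply]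
  split_ifs <;> simp

theorem setInt_isom (e : E ≃ₗᵢ[ℝ] E) (f : E → ℝ) :
    ∫ z in ball (0 : E) 1, f (e z) = ∫ z in ball (0 : E) 1, f z := by
  rw [← (e.measurePreserving).setIntegral_preimage_emb e.toHomeomorph.measurableEmbedding f]
  congr 2
  ext z; simp

/-- Polar coordinates reduce the integral to `∫₀¹ t ^ (n + 1) dt`. -/
theorem int_norm_sq (hn : 0 < n) : ∫ z in ball (0 : E) 1, ‖z‖ ^ 2 = n * volume.real (ball (0 : E) 1) / (n + 2) := by
  have : Nonempty (Fin n) := ⟨⟨0, hn⟩⟩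
  have := integral_fun_norm_addHaar (volume : Measure E) (fun t => if t < 1 then t ^ 2 else 0)
  have h2 : ∫ z in ball (0 : E) 1, ‖z‖ ^ 2 = ∫ z : E, (if ‖z‖ < 1 then ‖z‖ ^ 2 else 0) := by
    rw [← integral_indicator measurableSet_ball]
    congr 1; ext z; simp [indicator]
  rw [h2, this]
  have h3 : ∫ y in Ioi (0:ℝ), y ^ (n - 1) • (if y < 1 then y ^ 2 else 0) = 1 / (n + 2) := by
    have : ∀ y : ℝ, y ^ (n - 1) • (if y < 1 then y ^ 2 else 0) = (Iio (1:ℝ)).indicator (fun y => y ^ (n+1)) y := by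
      intro y
      simp only [indicator, mem_Iio]
      split_ifs
      · rw [smul_eq_mul, ← pow_add]; congr 1; omega
      · simp
    simp_rw [this]
    rw [setIntegral_indicator measurableSet_Iio, Ioi_inter_Iio, ← integral_Ioc_eq_integral_Ioo, ← intervalIntegral.integral_of_le (by norm_num), integral_pow]
    simp; ring
  simp only [finrank_euclideanSpace, Fintype.card_fin]
  rw [h3]; simp; ring

local notation "𝔹" => ball (0 : EuclideanSpace ℝ (Fin n)) 1
local notation "vol𝔹" => Measure.restrict (volume : Measure (EuclideanSpace ℝ (Fin n))) (ball 0 1)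

instance finite_ball : IsFiniteMeasure vol𝔹 :=
  isFiniteMeasure_restrict.2 measure_ball_lt_top.ne

theorem integrable_of_bdd {f : E → ℝ} (D : ℝ) (hm : AEStronglyMeasurable f vol𝔹)
    (hb : ∀ z ∈ 𝔹, |f z| ≤ D) : IntegrableOn f 𝔹 := by
  refine Integrable.of_bound hm D ?_
  filter_upwards [ae_restrict_mem measurableSet_ball] with z hz using hb z hz

theorem integrable_of_cont {f : E → ℝ} (hf : Continuous f) : IntegrableOn f 𝔹 :=
  (hf.continuousOn.integrableOn_compact (isCompact_closedBall (0 : E) 1)).mono_set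
    ball_subset_closedBall

/-- Coordinate swaps make all diagonal moments equal, so each is `1 / n` of `∫ ‖z‖²`; flipping the
sign of one coordinate kills the off-diagonal ones. -/
theorem int_coord (hn : 0 < n) (i j : Fin n) : ∫ z in 𝔹, z i * z j =
    if i = j then volume.real 𝔹 / (n + 2) else 0 := by
  split_ifs with h
  · subst h
    have h1 : ∀ k : Fin n, ∫ z in 𝔹, z k * z k = ∫ z in 𝔹, z i * z i := by
      intro k
      rw [← setInt_isom (LinearIsometryEquiv.piLpCongrLeft 2 ℝ ℝ (Equiv.swap i k))
        (fun z : E => z k * z k)]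
      simp [LinearIsometryEquiv.piLpCongrLeft_apply, Equiv.piCongrLeft']
    have h2 := int_norm_sq hn
    have h3 : ∫ z in 𝔹, ‖z‖ ^ 2 = ∑ k : Fin n, ∫ z in 𝔹, z k * z k := by
      rw [← integral_finsetSum]
      · congr 1; ext z
        rw [EuclideanSpace.norm_sq_eq]
        simp [pow_two]
      · intro k _
        exact integrable_of_cont (by fun_prop)
    rw [h3, Finset.sum_congr rfl (fun k _ => h1 k)] at h2
    simp only [Finset.sum_const, Finset.card_univ, Fintype.card_fin, nsmul_eq_mul] at h2
    have : (n : ℝ) ≠ 0 := by positivity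
    rw [mul_div_assoc] at h2
    exact mul_left_cancel₀ this h2
  · obtain ⟨e, he⟩ := single_flip i
    have := setInt_isom e (fun z : E => z i * z j)
    simp only [he, if_true, if_neg (Ne.symm h), neg_mul, integral_neg] at this
    linarith

theorem int_bilin (hn : 0 < n) (A : E →L[ℝ] E →L[ℝ] ℝ) : ∫ z in 𝔹, A z z =
    (∑ i, A (EuclideanSpace.single i 1) (EuclideanSpace.single i 1)) *
      (volume.real 𝔹 / (n + 2)) := by
  have h1 : ∀ z : E, A z z = ∑ i, ∑ j, (z i * z j) *
      A (EuclideanSpace.single i 1) (EuclideanSpace.single j 1) := by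
    intro z
    have hz : z = ∑ i, z i • EuclideanSpace.single i (1 : ℝ) := by
      simpa using ((EuclideanSpace.basisFun (Fin n) ℝ).sum_repr z).symm
    conv_lhs => rw [hz]
    simp only [map_sum, map_smul, sum_apply, smul_apply,
      smul_eq_mul, Finset.mul_sum]
    refine (Finset.sum_comm).trans ?_
    refine Finset.sum_congr rfl fun i _ => Finset.sum_congr rfl fun j _ => by ring
  simp_rw [h1]
  rw [integral_finsetSum _ (fun i _ => integrable_of_cont (by fun_prop))]
  rw [Finset.sum_mul]
  refine Finset.sum_congr rfl fun i _ => ?_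
  rw [integral_finsetSum _ (fun j _ => integrable_of_cont (by fun_prop))]
  simp_rw [integral_mul_const, int_coord hn]
  simp [mul_comm]

theorem int_linear (a : E →L[ℝ] ℝ) : ∫ z in 𝔹, a z = 0 := by
  have := setInt_isom (LinearIsometryEquiv.neg ℝ) (fun z : E => a z)
  simp only [LinearIsometryEquiv.coe_neg, map_neg, integral_neg] at this
  linarith

/-! ### Rescaling and pointwise limits -/

open Pointwise in
theorem int_ball (x : E) {r : ℝ} (hr : 0 < r) (f : E → ℝ) :
    ∫ y in ball x r, f y = r ^ n * ∫ z in 𝔹, f (x + r • z) := by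
  have h1 := Measure.setIntegral_comp_smul_of_pos (volume : Measure E) (fun y => f (x + y)) 𝔹 hr
  have h2 : r • 𝔹 = ball (0 : E) r := by
    rw [smul_unitBall_of_pos hr]
  have h3 := (measurePreserving_add_left (volume : Measure E) x).setIntegral_preimage_emb
    (measurableEmbedding_addLeft x) f (ball x r)
  have h4 : (fun y => x + y) ⁻¹' ball x r = ball (0 : E) r := by
    ext z; simp
  rw [h4] at h3
  rw [h1, h2, h3]
  simp only [finrank_euclideanSpace, Fintype.card_fin, smul_eq_mul]
  rw [← mul_assoc, mul_inv_cancel₀ (by positivity), one_mul]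

/-- A property holding near `0` holds on the whole ball of radius `2 r` for small `r > 0`. The
factor `2` accommodates all `z + v` with `z`, `v` in the unit ball. -/
theorem ev_scale {p : E → Prop} (hp : ∀ᶠ h in 𝓝 0, p h) :
    ∀ᶠ r in 𝓝[>] (0 : ℝ), 0 < r ∧ ∀ z : E, ‖z‖ ≤ 2 → p (r • z) := by
  obtain ⟨δ, hδ, hb⟩ := Metric.eventually_nhds_iff_ball.1 hp
  have : Ioo 0 (δ / 2) ∈ 𝓝[>] (0 : ℝ) := Ioo_mem_nhdsGT (by positivity)
  filter_upwards [this] with r hr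
  refine ⟨hr.1, fun z hz => hb _ ?_⟩
  rw [mem_ball_zero_iff, norm_smul, Real.norm_of_nonneg hr.1.le]
  nlinarith [hr.1, hr.2, norm_nonneg z]

/-- Dominated convergence on the unit ball with a constant bound. -/
theorem dct {F : ℝ → E → ℝ} {F₀ : E → ℝ} (D : ℝ)
    (hm : ∀ᶠ r in 𝓝[>] (0 : ℝ), AEStronglyMeasurable (F r) vol𝔹)
    (hb : ∀ᶠ r in 𝓝[>] (0 : ℝ), ∀ z ∈ 𝔹, |F r z| ≤ D)
    (hl : ∀ z ∈ 𝔹, Tendsto (fun r => F r z) (𝓝[>] 0) (𝓝 (F₀ z))) :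
    Tendsto (fun r => ∫ z in 𝔹, F r z) (𝓝[>] 0) (𝓝 (∫ z in 𝔹, F₀ z)) := by
  refine tendsto_integral_filter_of_dominated_convergence (fun _ => D) hm ?_ (integrable_const _) ?_
  · filter_upwards [hb] with r hr
    filter_upwards [ae_restrict_mem measurableSet_ball] with z hz using hr z hz
  · filter_upwards [ae_restrict_mem measurableSet_ball] with z hz using hl z hz

theorem tendsto_slope {g : E → ℝ} {b : E →L[ℝ] ℝ} (hg : HasFDerivAt g b 0) (z : E) :
    Tendsto (fun r : ℝ => (g (r • z) - g 0) / r) (𝓝[>] 0) (𝓝 (b z)) := by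
  have h := hg.lim (c := fun r : ℝ => r⁻¹) (l := 𝓝[>] 0) z
    (tendsto_norm_atTop_atTop.comp tendsto_inv_nhdsGT_zero)
  refine h.congr fun r => ?_
  simp [div_eq_inv_mul]

theorem tendsto_second {f : E → ℝ} {a : E →L[ℝ] ℝ} {H : E →L[ℝ] E →L[ℝ] ℝ}
    (hf : (fun h => f h - a h - H h h / 2) =o[𝓝 0] fun h => ‖h‖ ^ 2) (z : E) :
    Tendsto (fun r : ℝ => (f (r • z) - a (r • z)) / r ^ 2) (𝓝[>] 0) (𝓝 (H z z / 2)) := by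
  have h0 : Tendsto (fun r : ℝ => r • z) (𝓝[>] 0) (𝓝 0) := by
    have : Tendsto (fun r : ℝ => r • z) (𝓝 0) (𝓝 ((0 : ℝ) • z)) :=
      (continuous_id.smul continuous_const).tendsto 0
    rw [zero_smul] at this
    exact this.mono_left nhdsWithin_le_nhds
  have h1 := hf.comp_tendsto h0
  have h2 : (fun r : ℝ => ‖r • z‖ ^ 2) =O[𝓝[>] 0] fun r : ℝ => r ^ 2 := by
    refine Asymptotics.IsBigO.of_bound (‖z‖ ^ 2) (Eventually.of_forall fun r => ?_)
    simp [norm_smul, mul_pow, mul_comm]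
  have h3 := (h1.trans_isBigO h2).tendsto_div_nhds_zero
  have h4 := h3.add_const (H z z / 2)
  rw [zero_add] at h4
  refine h4.congr' ?_
  filter_upwards [self_mem_nhdsWithin] with r hr
  have : r ≠ 0 := ne_of_gt hr
  simp
  field_simp
  ring

theorem tendsto_first {f : E → ℝ} {a : E →L[ℝ] ℝ} {H : E →L[ℝ] E →L[ℝ] ℝ}
    (hf : (fun h => f h - a h - H h h / 2) =o[𝓝 0] fun h => ‖h‖ ^ 2) (z : E) :
    Tendsto (fun r : ℝ => f (r • z) / r) (𝓝[>] 0) (𝓝 (a z)) := by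
  have h0 : Tendsto (fun r : ℝ => r) (𝓝[>] 0) (𝓝 0) := nhdsWithin_le_nhds
  have h1 := (h0.mul (tendsto_second hf z)).add_const (a z)
  rw [zero_mul, zero_add] at h1
  refine h1.congr' ?_
  filter_upwards [self_mem_nhdsWithin] with r hr
  have : r ≠ 0 := ne_of_gt hr
  simp
  field_simp
  ring

theorem meas_scale {f : E → ℝ} {r : ℝ} (h : ∀ z : E, ‖z‖ ≤ 2 → ContinuousAt f (r • z)) :
    AEStronglyMeasurable (fun z => f (r • z)) vol𝔹 := by
  refine ContinuousOn.aestronglyMeasurable (fun z hz => ?_) measurableSet_ball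
  have hz' : ‖z‖ < 1 := by simpa using hz
  have := h z (by linarith)
  exact (ContinuousAt.comp (g := f) (f := fun z : E => r • z) this
    (by fun_prop)).continuousWithinAt

/-- The integral of `g` over the ball of radius `r` centred at `r z`, divided by `r ^ n`. -/
noncomputable def mass (g : E → ℝ) (r : ℝ) (z : E) : ℝ := ∫ v in 𝔹, g (r • (z + v))

theorem meas_mass {g : E → ℝ} {r : ℝ} (h : ∀ z : E, ‖z‖ ≤ 2 → ContinuousAt g (r • z)) :
    AEStronglyMeasurable (mass g r) vol𝔹 := by
  have : AEStronglyMeasurable (fun p : E × E => g (r • (p.1 + p.2)))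
      ((vol𝔹).prod vol𝔹) := by
    rw [Measure.prod_restrict]
    refine ContinuousOn.aestronglyMeasurable (fun p hp => ?_)
      (measurableSet_ball.prod measurableSet_ball)
    have h1 : ‖p.1‖ < 1 := by simpa using hp.1
    have h2 : ‖p.2‖ < 1 := by simpa using hp.2
    have := h (p.1 + p.2) (by linarith [norm_add_le p.1 p.2])
    exact (ContinuousAt.comp (g := g) (f := fun p : E × E => r • (p.1 + p.2)) this
      (by fun_prop)).continuousWithinAt
  exact this.integral_prod_right'

/-- The local data at the base point, moved to the origin: `f` (the increment of `u`) has second-order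
expansion `a + H / 2`, and `g` (the weight) is positive at `0` with derivative `b` there. Both
functions are continuous near `0`. -/
structure Setup (f g : E → ℝ) (a b : E →L[ℝ] ℝ) (H : E →L[ℝ] E →L[ℝ] ℝ) : Prop where
  fc : ∀ᶠ h in 𝓝 0, ContinuousAt f h
  gc : ∀ᶠ h in 𝓝 0, ContinuousAt g h
  pos : 0 < g 0
  f2 : (fun h => f h - a h - H h h / 2) =o[𝓝 0] fun h => ‖h‖ ^ 2
  g1 : HasFDerivAt g b 0


/-- One constant bounding all the difference quotients on the ball of radius `2 r`. -/
theorem Setup.bounds {f g : E → ℝ} {a b : E →L[ℝ] ℝ}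
    {H : E →L[ℝ] E →L[ℝ] ℝ} (S : Setup f g a b H) : ∃ C : ℝ, 0 < C ∧ ∀ᶠ r in 𝓝[>] (0 : ℝ), 0 < r ∧
    ∀ z : E, ‖z‖ ≤ 2 → ContinuousAt f (r • z) ∧ ContinuousAt g (r • z) ∧
      |f (r • z) / r| ≤ C ∧ |(f (r • z) - a (r • z)) / r ^ 2| ≤ C ∧
      |(g (r • z) - g 0) / r| ≤ C ∧ g 0 / 2 ≤ g (r • z) ∧ g (r • z) ≤ C := by
  have hH : (fun h => H h h / 2) =O[𝓝 0] fun h => ‖h‖ ^ 2 := by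
    refine Asymptotics.IsBigO.of_bound (‖H‖ / 2) (Eventually.of_forall fun h => ?_)
    have := H.le_opNorm₂ h h
    simp only [norm_div, norm_pow, norm_norm, Real.norm_ofNat]
    nlinarith
  have hfa : (fun h => f h - a h) =O[𝓝 0] fun h => ‖h‖ ^ 2 := by
    simpa using S.f2.isBigO.add hH
  obtain ⟨C₁, hC₁, h1⟩ := hfa.exists_pos
  have hg : (fun h => g h - g 0) =O[𝓝 0] fun h => h := by
    simpa using S.g1.isBigO_sub
  obtain ⟨C₂, hC₂, h2⟩ := hg.exists_pos
  have h3 : ∀ᶠ h in 𝓝 (0 : E), g h ∈ Icc (g 0 / 2) (2 * g 0) :=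
    S.g1.continuousAt.eventually_mem (Icc_mem_nhds (half_lt_self S.pos) (by linarith [S.pos]))
  have hr1 : ∀ᶠ r in 𝓝[>] (0 : ℝ), r < 1 := nhdsWithin_le_nhds (Iio_mem_nhds one_pos)
  refine ⟨4 * C₁ + 2 * ‖a‖ + 2 * C₂ + 2 * g 0, by have := S.pos; positivity, ?_⟩
  filter_upwards [ev_scale (S.fc.and (S.gc.and (h1.bound.and (h2.bound.and h3)))), hr1]
    with r ⟨hr, h⟩ hr1
  refine ⟨hr, fun z hz => ?_⟩
  obtain ⟨k1, k2, k3, k4, k5⟩ := h z hz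
  have p0 := S.pos
  have q0 := norm_nonneg a
  have nz := norm_nonneg z
  have hz2 : ‖z‖ ^ 2 ≤ 4 := by nlinarith
  have t1 : |(f (r • z) - a (r • z)) / r ^ 2| ≤ 4 * C₁ := by
    rw [abs_div, abs_of_pos (by positivity : 0 < r ^ 2), div_le_iff₀ (by positivity)]
    simp only [norm_smul, Real.norm_of_nonneg hr.le, norm_pow, norm_mul, norm_norm] at k3
    rw [Real.norm_eq_abs] at k3
    refine k3.trans ?_
    rw [mul_pow]
    nlinarith [mul_le_mul_of_nonneg_left hz2 (by positivity : 0 ≤ C₁ * r ^ 2)]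
  have t2 : |(g (r • z) - g 0) / r| ≤ 2 * C₂ := by
    rw [abs_div, abs_of_pos hr, div_le_iff₀ hr]
    simp only [norm_smul, Real.norm_of_nonneg hr.le] at k4
    rw [Real.norm_eq_abs] at k4
    refine k4.trans ?_
    nlinarith [mul_le_mul_of_nonneg_left hz (by positivity : 0 ≤ C₂ * r)]
  have t3 : |a z| ≤ 2 * ‖a‖ := by
    have := a.le_opNorm z
    rw [Real.norm_eq_abs] at this
    nlinarith
  have t4 : |f (r • z) / r| ≤ 4 * C₁ + 2 * ‖a‖ := by
    have e : f (r • z) / r = r * ((f (r • z) - a (r • z)) / r ^ 2) + a z := by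
      simp; field_simp; ring
    rw [e]
    refine (abs_add_le _ _).trans ?_
    rw [abs_mul, abs_of_pos hr]
    nlinarith [abs_nonneg ((f (r • z) - a (r • z)) / r ^ 2)]
  exact ⟨k1, k2, by linarith, by linarith, by linarith, k5.1, by linarith [k5.2]⟩

theorem abs_apply_le (a : E →L[ℝ] ℝ) {z : E} (hz : z ∈ 𝔹) : |a z| ≤ ‖a‖ := by
  have hz' : ‖z‖ < 1 := by simpa using hz
  have := a.le_opNorm z
  rw [Real.norm_eq_abs] at this
  nlinarith [norm_nonneg a]

theorem Setup.tendsto_g {f g : E → ℝ} {a b : E →L[ℝ] ℝ} {H : E →L[ℝ] E →L[ℝ] ℝ}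
    (S : Setup f g a b H) (z : E) : Tendsto (fun r : ℝ => g (r • z)) (𝓝[>] 0) (𝓝 (g 0)) := by
  have h0 : Tendsto (fun r : ℝ => r) (𝓝[>] 0) (𝓝 0) := nhdsWithin_le_nhds
  have h1 := (h0.mul (tendsto_slope S.g1 z)).add_const (g 0)
  rw [zero_mul, zero_add] at h1
  refine h1.congr' ?_
  filter_upwards [self_mem_nhdsWithin] with r hr
  have : r ≠ 0 := ne_of_gt hr
  field_simp
  ring

/-! ### Limits of the rescaled integrals -/

/-- Limit of the numerator of the AMV operator. -/
theorem Setup.tendsto_num {f g : E → ℝ} {a b : E →L[ℝ] ℝ}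
    {H : E →L[ℝ] E →L[ℝ] ℝ} (S : Setup f g a b H) :
    Tendsto (fun r : ℝ => ∫ z in 𝔹, f (r • z) * g (r • z) / r ^ 2) (𝓝[>] 0)
      (𝓝 (∫ z in 𝔹, (H z z / 2 * g 0 + a z * b z))) := by
  obtain ⟨C, hC, hb⟩ := S.bounds
  have hm : ∀ᶠ r in 𝓝[>] (0 : ℝ), AEStronglyMeasurable (fun z => (f (r • z) - a (r • z)) / r ^ 2
      * g (r • z) + a z * ((g (r • z) - g 0) / r)) vol𝔹 := by
    filter_upwards [hb] with r ⟨hr, h⟩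
    have mf := meas_scale fun z hz => (h z hz).1
    have mg := meas_scale fun z hz => (h z hz).2.1
    have ma : AEStronglyMeasurable (fun z => a z) vol𝔹 := a.continuous.aestronglyMeasurable
    have ma' : AEStronglyMeasurable (fun z => a (r • z)) vol𝔹 :=
      (by fun_prop : Continuous fun z => a (r • z)).aestronglyMeasurable
    simp only [div_eq_mul_inv]
    exact (((mf.sub ma').mul_const _).mul mg).add (ma.mul ((mg.sub aestronglyMeasurable_const).mul_const _))
  have hbd : ∀ᶠ r in 𝓝[>] (0 : ℝ), ∀ z ∈ 𝔹, |(f (r • z) - a (r • z)) / r ^ 2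
      * g (r • z) + a z * ((g (r • z) - g 0) / r)| ≤ C * C + ‖a‖ * C := by
    filter_upwards [hb] with r ⟨hr, h⟩ z hz
    have hz' : ‖z‖ < 1 := by simpa using hz
    obtain ⟨-, -, -, h1, h2, h3, h4⟩ := h z (by linarith)
    have := S.pos
    refine (abs_add_le _ _).trans ?_
    rw [abs_mul, abs_mul]
    gcongr
    · rw [abs_le]; constructor <;> linarith
    · exact abs_apply_le a hz
  have key := dct (F₀ := fun z => H z z / 2 * g 0 + a z * b z) _ hm hbd ?_
  · refine key.congr' ?_
    filter_upwards [hm, hbd, hb] with r h1 h2 ⟨hr, _⟩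
    -- The dominated integrand differs from the original one by an odd function.
    have i1 := integrable_of_bdd _ h1 h2
    have i2 : IntegrableOn (fun z => (g 0 / r) * a z) 𝔹 := integrable_of_cont (by fun_prop)
    have e := integral_add i1 i2
    rw [integral_const_mul, int_linear, mul_zero, add_zero] at e
    rw [← e]
    congr 1; ext z
    simp
    field_simp
    ring
  · intro z _
    exact ((tendsto_second S.f2 z).mul (S.tendsto_g z)).add ((tendsto_slope S.g1 z).const_mul _)

theorem norm_add_le_two {z v : E} (hz : z ∈ 𝔹) (hv : v ∈ 𝔹) : ‖z + v‖ ≤ 2 := by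
  have h1 : ‖z‖ < 1 := by simpa using hz
  have h2 : ‖v‖ < 1 := by simpa using hv
  linarith [norm_add_le z v]

theorem meas_slice {g : E → ℝ} {r : ℝ} (h : ∀ z : E, ‖z‖ ≤ 2 → ContinuousAt g (r • z)) {z : E}
    (hz : z ∈ 𝔹) : AEStronglyMeasurable (fun v => g (r • (z + v))) vol𝔹 := by
  refine ContinuousOn.aestronglyMeasurable (fun v hv => ?_) measurableSet_ball
  exact (ContinuousAt.comp (g := g) (f := fun v : E => r • (z + v)) (h _ (norm_add_le_two hz hv))
    (by fun_prop)).continuousWithinAt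

theorem Setup.tendsto_mass {f g : E → ℝ} {a b : E →L[ℝ] ℝ} {H : E →L[ℝ] E →L[ℝ] ℝ}
    (S : Setup f g a b H) {z : E} (hz : z ∈ 𝔹) :
    Tendsto (fun r : ℝ => mass g r z) (𝓝[>] 0) (𝓝 (volume.real 𝔹 * g 0)) := by
  obtain ⟨C, hC, hb⟩ := S.bounds
  have key := dct (F := fun r v => g (r • (z + v))) (F₀ := fun _ => g 0) C ?_ ?_
    (fun v _ => S.tendsto_g (z + v))
  · simpa [mass] using key
  · filter_upwards [hb] with r ⟨hr, h⟩
    exact meas_slice (fun z hz => (h z hz).2.1) hz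
  · filter_upwards [hb] with r ⟨hr, h⟩ v hv
    obtain ⟨-, -, -, -, -, h3, h4⟩ := h (z + v) (norm_add_le_two hz hv)
    have := S.pos
    rw [abs_le]; constructor <;> linarith

/-- Uniform bounds for the masses and their difference quotients; the last clause writes the
difference quotient as an integral of difference quotients of `g`. -/
theorem Setup.mass_bounds {f g : E → ℝ} {a b : E →L[ℝ] ℝ} {H : E →L[ℝ] E →L[ℝ] ℝ}
    (S : Setup f g a b H) : ∃ D : ℝ, 0 < D ∧ ∀ᶠ r in 𝓝[>] (0 : ℝ), ∀ z ∈ 𝔹,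
      volume.real 𝔹 * (g 0 / 2) ≤ mass g r z ∧ |(mass g r 0 - mass g r z) / r| ≤ D ∧
      (mass g r 0 - mass g r z) / r =
        ∫ v in 𝔹, ((g (r • v) - g 0) / r - (g (r • (z + v)) - g 0) / r) := by
  obtain ⟨C, hC, hb⟩ := S.bounds
  refine ⟨2 * C * volume.real 𝔹 + 1, by positivity, ?_⟩
  filter_upwards [hb] with r ⟨hr, h⟩ z hz
  have hs : ∀ z ∈ 𝔹, IntegrableOn (fun v => g (r • (z + v))) 𝔹 := by
    intro z hz
    refine integrable_of_bdd C (meas_slice (fun z hz => (h z hz).2.1) hz) fun v hv => ?_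
    obtain ⟨-, -, -, -, -, h3, h4⟩ := h (z + v) (norm_add_le_two hz hv)
    have := S.pos
    rw [abs_le]; constructor <;> linarith
  have h0 : (0 : E) ∈ 𝔹 := by simp
  have e : (mass g r 0 - mass g r z) / r =
      ∫ v in 𝔹, ((g (r • v) - g 0) / r - (g (r • (z + v)) - g 0) / r) := by
    rw [mass, mass, ← integral_sub (hs 0 h0) (hs z hz), ← integral_div]
    congr 1; ext v
    rw [zero_add]; ring
  refine ⟨?_, ?_, e⟩
  · have := setIntegral_mono_on (integrableOn_const (C := g 0 / 2) measure_ball_lt_top.ne) (hs z hz)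
      measurableSet_ball fun v hv => (h (z + v) (norm_add_le_two hz hv)).2.2.2.2.2.1
    simpa [mass] using this
  · rw [e]
    have := norm_setIntegral_le_of_norm_le_const (μ := (volume : Measure E)) (s := 𝔹)
      (f := fun v => (g (r • v) - g 0) / r - (g (r • (z + v)) - g 0) / r) (C := 2 * C)
      measure_ball_lt_top fun v hv => ?_
    · rw [Real.norm_eq_abs] at this
      linarith
    · have h1 := (h (0 + v) (norm_add_le_two h0 hv)).2.2.2.2.1
      have h2 := (h (z + v) (norm_add_le_two hz hv)).2.2.2.2.1
      rw [zero_add] at h1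
      rw [Real.norm_eq_abs]
      linarith [abs_sub ((g (r • v) - g 0) / r) ((g (r • (z + v)) - g 0) / r)]

theorem Setup.tendsto_mass_slope {f g : E → ℝ} {a b : E →L[ℝ] ℝ} {H : E →L[ℝ] E →L[ℝ] ℝ}
    (S : Setup f g a b H) {z : E} (hz : z ∈ 𝔹) :
    Tendsto (fun r : ℝ => (mass g r 0 - mass g r z) / r) (𝓝[>] 0)
      (𝓝 (-(volume.real 𝔹 * b z))) := by
  obtain ⟨C, hC, hb⟩ := S.bounds
  obtain ⟨D, hD, hm⟩ := S.mass_bounds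
  have h0 : (0 : E) ∈ 𝔹 := by simp
  have key := dct (F := fun r v => (g (r • v) - g 0) / r - (g (r • (z + v)) - g 0) / r)
    (F₀ := fun v => b v - b (z + v)) (2 * C) ?_ ?_
    (fun v _ => (tendsto_slope S.g1 v).sub (tendsto_slope S.g1 (z + v)))
  · have e : ∫ v in 𝔹, (b v - b (z + v)) = -(volume.real 𝔹 * b z) := by
      simp
    rw [e] at key
    refine key.congr' ?_
    filter_upwards [hm] with r hr using (hr z hz).2.2.symm
  · filter_upwards [hb] with r ⟨hr, h⟩
    have m0 := meas_scale fun z hz => (h z hz).2.1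
    have m1 := meas_slice (fun z hz => (h z hz).2.1) hz
    simp only [div_eq_mul_inv]
    exact ((m0.sub aestronglyMeasurable_const).mul_const _).sub
      ((m1.sub aestronglyMeasurable_const).mul_const _)
  · filter_upwards [hb] with r ⟨hr, h⟩ v hv
    have h1 := (h (0 + v) (norm_add_le_two h0 hv)).2.2.2.2.1
    have h2 := (h (z + v) (norm_add_le_two hz hv)).2.2.2.2.1
    rw [zero_add] at h1
    linarith [abs_sub ((g (r • v) - g 0) / r) ((g (r • (z + v)) - g 0) / r)]

theorem vol_pos : 0 < volume.real 𝔹 :=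
  ENNReal.toReal_pos (measure_ball_pos _ _ one_pos).ne' measure_ball_lt_top.ne

/-- Limit of the term by which the SAMV numerator differs from twice the AMV one. -/
theorem Setup.tendsto_corr {f g : E → ℝ} {a b : E →L[ℝ] ℝ} {H : E →L[ℝ] E →L[ℝ] ℝ}
    (S : Setup f g a b H) :
    Tendsto (fun r : ℝ => ∫ z in 𝔹, (f (r • z) / r) *
        (((mass g r 0 - mass g r z) / r) / mass g r z) * g (r • z)) (𝓝[>] 0)
      (𝓝 (-∫ z in 𝔹, a z * b z)) := by
  obtain ⟨C, hC, hb⟩ := S.bounds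
  obtain ⟨D, hD, hm⟩ := S.mass_bounds
  have hV := vol_pos (n := n)
  have hp := S.pos
  rw [← integral_neg]
  refine dct (C * (D / (volume.real 𝔹 * (g 0 / 2))) * C) ?_ ?_ ?_
  · filter_upwards [hb] with r ⟨hr, h⟩
    have mf := meas_scale fun z hz => (h z hz).1
    have mg := meas_scale fun z hz => (h z hz).2.1
    have mm := meas_mass fun z hz => (h z hz).2.1
    have mi : AEStronglyMeasurable (fun z => (mass g r z)⁻¹) vol𝔹 :=
      mm.aemeasurable.inv.aestronglyMeasurable
    have m0 : AEStronglyMeasurable (fun _ : E => mass g r 0) vol𝔹 := aestronglyMeasurable_const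
    simp only [div_eq_mul_inv]
    exact ((mf.mul_const _).mul (((m0.sub mm).mul_const _).mul mi)).mul mg
  · filter_upwards [hb, hm] with r ⟨hr, h⟩ h' z hz
    have hz' : ‖z‖ < 1 := by simpa using hz
    obtain ⟨-, -, h1, -, -, h3, h4⟩ := h z (by linarith)
    obtain ⟨k1, k2, -⟩ := h' z hz
    rw [abs_mul, abs_mul, abs_div _ (mass g r z)]
    have : 0 < volume.real 𝔹 * (g 0 / 2) := by positivity
    have hg : |g (r • z)| ≤ C := by rw [abs_le]; constructor <;> linarith
    have hmm : volume.real 𝔹 * (g 0 / 2) ≤ |mass g r z| := k1.trans (le_abs_self _)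
    gcongr
  · intro z hz
    have hne : volume.real 𝔹 * g 0 ≠ 0 := by positivity
    have := ((tendsto_first S.f2 z).mul
      ((S.tendsto_mass_slope hz).div (S.tendsto_mass hz) hne)).mul (S.tendsto_g z)
    convert this using 2
    · rfl
    · field_simp

/-- The AMV limit after rescaling to the unit ball. -/
theorem Setup.amv {f g : E → ℝ} {a b : E →L[ℝ] ℝ} {H : E →L[ℝ] E →L[ℝ] ℝ} (hn : 0 < n)
    (S : Setup f g a b H) :
    Tendsto (fun r : ℝ => 1 / r ^ 2 * ((mass g r 0)⁻¹ * ∫ z in 𝔹, f (r • z) * g (r • z)))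
      (𝓝[>] 0) (𝓝 (1 / (2 * ((n : ℝ) + 2)) *
        (∑ i, H (EuclideanSpace.single i 1) (EuclideanSpace.single i 1) +
          2 * ((g 0)⁻¹ * ∑ i, a (EuclideanSpace.single i 1) * b (EuclideanSpace.single i 1))))) := by
  have hV := vol_pos (n := n)
  have hp := S.pos
  have h0 : (0 : E) ∈ 𝔹 := by simp
  have hne : volume.real 𝔹 * g 0 ≠ 0 := by positivity
  have key := ((S.tendsto_mass h0).inv₀ hne).mul S.tendsto_num
  have e : ∫ z in 𝔹, (H z z / 2 * g 0 + a z * b z) = _ :=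
    (integral_congr_ae (Eventually.of_forall fun z => by
      simp; ring)).trans (int_bilin hn ((g 0 / 2) • H + a.smulRight b))
  rw [e] at key
  convert key using 2 with r
  · rw [integral_div]
    ring
  · simp [Finset.sum_add_distrib, ← Finset.mul_sum]
    field_simp

/-- The SAMV limit after rescaling to the unit ball. -/
theorem Setup.samv {f g : E → ℝ} {a b : E →L[ℝ] ℝ} {H : E →L[ℝ] E →L[ℝ] ℝ} (hn : 0 < n)
    (S : Setup f g a b H) :
    Tendsto (fun r : ℝ => 1 / (2 * r ^ 2) * ((mass g r 0)⁻¹ *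
        ∫ z in 𝔹, f (r • z) * (1 + mass g r 0 / mass g r z) * g (r • z)))
      (𝓝[>] 0) (𝓝 (1 / (2 * ((n : ℝ) + 2)) *
        (∑ i, H (EuclideanSpace.single i 1) (EuclideanSpace.single i 1) +
          (g 0)⁻¹ * ∑ i, a (EuclideanSpace.single i 1) * b (EuclideanSpace.single i 1)))) := by
  have hV := vol_pos (n := n)
  have hp := S.pos
  have h0 : (0 : E) ∈ 𝔹 := by simp
  have hne : volume.real 𝔹 * g 0 ≠ 0 := by positivity
  obtain ⟨C, hC, hb⟩ := S.bounds
  obtain ⟨D, hD, hm⟩ := S.mass_bounds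
  have key := (S.amv hn).add ((((S.tendsto_mass h0).inv₀ hne).mul S.tendsto_corr).const_mul (1 / 2))
  have e : ∫ z in 𝔹, a z * b z = _ := int_bilin hn (a.smulRight b)
  rw [e] at key
  have el : ∀ s : ℝ, 1 / (2 * ((n : ℝ) + 2)) * (s +
          2 * ((g 0)⁻¹ * ∑ i, a (EuclideanSpace.single i 1) * b (EuclideanSpace.single i 1))) +
      1 / 2 * ((volume.real 𝔹 * g 0)⁻¹ * -((∑ i, (a.smulRight b) (EuclideanSpace.single i 1)
        (EuclideanSpace.single i 1)) * (volume.real 𝔹 / (n + 2)))) =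
      1 / (2 * ((n : ℝ) + 2)) *
        (s + (g 0)⁻¹ * ∑ i, a (EuclideanSpace.single i 1) * b (EuclideanSpace.single i 1)) := by
    intro s
    simp
    field_simp
    ring
  rw [el] at key
  refine key.congr' ?_
  filter_upwards [hb, hm] with r ⟨hr, h⟩ h'
  have mf := meas_scale fun z hz => (h z hz).1
  have mg := meas_scale fun z hz => (h z hz).2.1
  have mm := meas_mass fun z hz => (h z hz).2.1
  have mi : AEStronglyMeasurable (fun z => (mass g r z)⁻¹) vol𝔹 :=
    mm.aemeasurable.inv.aestronglyMeasurable
  have m0 : AEStronglyMeasurable (fun _ : E => mass g r 0) vol𝔹 := aestronglyMeasurable_const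
  have hgb : ∀ z ∈ 𝔹, |g (r • z)| ≤ C ∧ |f (r • z) / r| ≤ C := fun z hz => by
    have hz' : ‖z‖ < 1 := by simpa using hz
    obtain ⟨-, -, h1, -, -, h3, h4⟩ := h z (by linarith)
    exact ⟨by rw [abs_le]; constructor <;> linarith, h1⟩
  have i1 : IntegrableOn (fun z => f (r • z) / r * g (r • z)) 𝔹 := by
    refine integrable_of_bdd (C * C) ?_ fun z hz => ?_
    · simp only [div_eq_mul_inv]
      exact (mf.mul_const _).mul mg
    · rw [abs_mul]
      have := hgb z hz
      gcongr
      exacts [this.2, this.1]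
  have i2 : IntegrableOn (fun z => (f (r • z) / r) *
        (((mass g r 0 - mass g r z) / r) / mass g r z) * g (r • z)) 𝔹 := by
    refine integrable_of_bdd (C * (D / (volume.real 𝔹 * (g 0 / 2))) * C) ?_ fun z hz => ?_
    · simp only [div_eq_mul_inv]
      exact ((mf.mul_const _).mul (((m0.sub mm).mul_const _).mul mi)).mul mg
    · obtain ⟨k1, k2, -⟩ := h' z hz
      obtain ⟨hg, hf⟩ := hgb z hz
      rw [abs_mul, abs_mul, abs_div _ (mass g r z)]
      have : 0 < volume.real 𝔹 * (g 0 / 2) := by positivity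
      have hmm : volume.real 𝔹 * (g 0 / 2) ≤ |mass g r z| := k1.trans (le_abs_self _)
      gcongr
  have e2 : ∫ z in 𝔹, f (r • z) * (1 + mass g r 0 / mass g r z) * g (r • z) =
      ∫ z in 𝔹, ((2 * r) * (f (r • z) / r * g (r • z)) + r ^ 2 * ((f (r • z) / r) *
        (((mass g r 0 - mass g r z) / r) / mass g r z) * g (r • z))) := by
    refine setIntegral_congr_fun measurableSet_ball fun z hz => ?_
    have : 0 < volume.real 𝔹 * (g 0 / 2) := by positivity
    have hmz : mass g r z ≠ 0 := (this.trans_le (h' z hz).1).ne'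
    field_simp
    ring
  have e3 : ∫ z in 𝔹, f (r • z) * g (r • z) = r * ∫ z in 𝔹, f (r • z) / r * g (r • z) := by
    rw [← integral_const_mul]
    congr 1; ext z
    field_simp
  rw [e2, integral_add (i1.const_mul _) (i2.const_mul _), integral_const_mul, integral_const_mul,
    e3]
  field_simp

/-! ### Weighted measures of balls and gradients -/

theorem muInt {Ω : Set E} {w : E → ℝ} (hw : ContinuousOn w Ω)
    (hw0 : ∀ y ∈ Ω, 0 ≤ w y) {y : E} {r : ℝ} (hy : ball y r ⊆ Ω) (F : E → ℝ) :
    ∫ v in ball y r, F v ∂((volume.restrict Ω).withDensity fun y => ENNReal.ofReal (w y)) =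
      ∫ v in ball y r, w v * F v := by
  rw [restrict_withDensity measurableSet_ball, Measure.restrict_restrict measurableSet_ball,
    inter_eq_left.2 hy, integral_withDensity_eq_integral_toReal_smul₀]
  · refine setIntegral_congr_fun measurableSet_ball fun v hv => ?_
    simp [ENNReal.toReal_ofReal (hw0 v (hy hv))]
  · exact ((hw.mono hy).aemeasurable measurableSet_ball).ennreal_ofReal
  · exact Eventually.of_forall fun _ => ENNReal.ofReal_lt_top

theorem muBall {Ω : Set E} {w : E → ℝ} (hw : ContinuousOn w Ω)
    (hw0 : ∀ y ∈ Ω, 0 ≤ w y) {x z : E} {r : ℝ} (hr : 0 < r) (hy : ball (x + r • z) r ⊆ Ω) :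
    (((volume.restrict Ω).withDensity fun y => ENNReal.ofReal (w y))
      (ball (x + r • z) r)).toReal = r ^ n * mass (fun h => w (x + h)) r z := by
  have := muInt hw hw0 hy (fun _ => 1)
  simp only [mul_one] at this
  rw [int_ball _ hr, setIntegral_const, smul_eq_mul, mul_one] at this
  rw [← Measure.real, this, mass]
  simp only [smul_add, add_assoc]

theorem inner_grad (f g : E → ℝ) (x : E) : ⟪gradient f x, gradient g x⟫ =
    ∑ i, fderiv ℝ g x (EuclideanSpace.single i 1) * fderiv ℝ f x (EuclideanSpace.single i 1) := by
  have h : ∀ (f : E → ℝ) (v : E), ⟪gradient f x, v⟫ = fderiv ℝ f x v := fun f v => by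
    rw [← toDual_gradient]; simp
  rw [← (EuclideanSpace.basisFun (Fin n) ℝ).sum_inner_mul_inner]
  refine Finset.sum_congr rfl fun i _ => ?_
  rw [real_inner_comm (gradient g x), h, h, mul_comm]
  simp

end

/-- Let `Ω ⊆ ℝⁿ` be open with the Euclidean distance, `w ∈ C¹(Ω)`
nonnegative and `μ = w 𝓛ⁿ ⌞ Ω` a metric measure space on `Ω`.  At any `x ∈ Ω` with
`w(x) > 0`, every `u ∈ C²(Ω)` admits pointwise AMV and SAMV Laplacians at `x`, with
`Δ_μ u(x) = (2(n+2))⁻¹ (Δu(x) + 2⟨∇ ln w(x), ∇u(x)⟩)` and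
`Δ̃_μ u(x) = (2(n+2))⁻¹ (Δu(x) + ⟨∇ ln w(x), ∇u(x)⟩)`. -/
theorem stmt_13 {n : ℕ} (hn : 0 < n)
    (Ω : Set (EuclideanSpace ℝ (Fin n))) (hΩ : IsOpen Ω)
    (w : EuclideanSpace ℝ (Fin n) → ℝ) (hw : ContDiffOn ℝ 1 w Ω)
    (hw0 : ∀ y ∈ Ω, 0 ≤ w y)
    (μ : Measure (EuclideanSpace ℝ (Fin n)))
    (hμdef : μ = (volume.restrict Ω).withDensity fun y => ENNReal.ofReal (w y))
    (hμpos : ∀ (y : EuclideanSpace ℝ (Fin n)) (r : ℝ), 0 < r → ball y r ⊆ Ω →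
      0 < μ (ball y r))
    (x : EuclideanSpace ℝ (Fin n)) (hx : x ∈ Ω) (hwx : 0 < w x)
    (u : EuclideanSpace ℝ (Fin n) → ℝ) (hu : ContDiffOn ℝ 2 u Ω) :
    Tendsto (fun r : ℝ => (1 / r ^ 2) * ⨍ y in ball x r, (u y - u x) ∂μ)
      (𝓝[>] (0 : ℝ))
      (𝓝 ((1 / (2 * ((n : ℝ) + 2))) *
        (eucLap u x + 2 * ⟪gradient (fun y => Real.log (w y)) x, gradient u x⟫))) ∧
    Tendsto (fun r : ℝ => (1 / (2 * r ^ 2)) *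
        ⨍ y in ball x r, (u y - u x) * (1 + (μ (ball x r)).toReal / (μ (ball y r)).toReal) ∂μ)
      (𝓝[>] (0 : ℝ))
      (𝓝 ((1 / (2 * ((n : ℝ) + 2))) *
        (eucLap u x + ⟪gradient (fun y => Real.log (w y)) x, gradient u x⟫))) := by
  subst hμdef
  have hux : ContDiffAt ℝ 2 u x := hu.contDiffAt (hΩ.mem_nhds hx)
  have hwd : DifferentiableAt ℝ w x :=
    (hw.contDiffAt (hΩ.mem_nhds hx)).differentiableAt (by norm_num)
  have hT : Tendsto (fun h => x + h) (𝓝 0) (𝓝 x) := by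
    simpa using (continuous_const_add x).tendsto 0
  have hΩ0 : ∀ᶠ h in 𝓝 (0 : EuclideanSpace ℝ (Fin n)), x + h ∈ Ω :=
    hT.eventually (hΩ.mem_nhds hx)
  have S : Setup (fun h => u (x + h) - u x) (fun h => w (x + h)) (fderiv ℝ u x) (fderiv ℝ w x)
      (fderiv ℝ (fderiv ℝ u) x) := by
    refine ⟨?_, ?_, by simpa using hwx, taylor2 u x hux, ?_⟩
    · filter_upwards [hΩ0] with h hh
      have := hu.continuousOn.continuousAt (hΩ.mem_nhds hh)
      exact (this.comp (f := fun h => x + h) (by fun_prop)).sub continuousAt_const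
    · filter_upwards [hΩ0] with h hh
      have := hw.continuousOn.continuousAt (hΩ.mem_nhds hh)
      exact this.comp (f := fun h => x + h) (by fun_prop)
    · refine (hasFDerivAt_comp_add_left x).2 ?_
      rw [add_zero]
      exact hwd.hasFDerivAt
  have hlap : eucLap u x = ∑ i, fderiv ℝ (fderiv ℝ u) x (EuclideanSpace.single i 1)
      (EuclideanSpace.single i 1) := by
    simp [eucLap, iteratedFDeriv_two_apply]
  have hlog : fderiv ℝ (fun y => Real.log (w y)) x = (w x)⁻¹ • fderiv ℝ w x :=
    (hwd.hasFDerivAt.log hwx.ne').fderiv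
  have hgrad : ⟪gradient (fun y => Real.log (w y)) x, gradient u x⟫ =
      (w (x + 0))⁻¹ * ∑ i, fderiv ℝ u x (EuclideanSpace.single i 1) *
        fderiv ℝ w x (EuclideanSpace.single i 1) := by
    rw [inner_grad, hlog, Finset.mul_sum, add_zero]
    refine Finset.sum_congr rfl fun i _ => ?_
    simp; ring
  have hsub : ∀ᶠ r in 𝓝[>] (0 : ℝ), 0 < r ∧ ∀ z ∈ ball (0 : EuclideanSpace ℝ (Fin n)) 1,
      ball (x + r • z) r ⊆ Ω := by
    filter_upwards [ev_scale hΩ0] with r ⟨hr, h⟩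
    refine ⟨hr, fun z hz v hv => ?_⟩
    have h1 : v = x + r • (z + r⁻¹ • (v - (x + r • z))) := by
      rw [smul_add, smul_inv_smul₀ hr.ne']; abel
    rw [h1]
    refine h _ (norm_add_le_two hz ?_)
    rw [mem_ball_zero_iff, norm_smul, norm_inv, Real.norm_of_nonneg hr.le, inv_mul_lt_iff₀ hr]
    simpa [dist_eq_norm] using hv
  have hwc := hw.continuousOn
  rw [hlap, hgrad]
  have h0 : (0 : EuclideanSpace ℝ (Fin n)) ∈ ball (0 : EuclideanSpace ℝ (Fin n)) 1 := by simp
  have hav : ∀ r : ℝ, 0 < r → ball x r ⊆ Ω → ∀ F : EuclideanSpace ℝ (Fin n) → ℝ,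
      ⨍ y in ball x r, F y ∂((volume.restrict Ω).withDensity fun y => ENNReal.ofReal (w y)) =
      (mass (fun h => w (x + h)) r 0)⁻¹ *
        ∫ z in ball 0 1, F (x + r • z) * w (x + r • z) := by
    intro r hr hb F
    have hm := muBall (z := 0) hwc hw0 hr (by simpa using hb)
    rw [smul_zero, add_zero] at hm
    rw [setAverage_eq, Measure.real, hm, muInt hwc hw0 hb, int_ball _ hr, smul_eq_mul, mul_inv]
    have : (r ^ n) ≠ 0 := by positivity
    field_simp
    simp only [mul_comm]
  constructor
  · refine (S.amv hn).congr' ?_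
    filter_upwards [hsub] with r ⟨hr, h⟩
    rw [hav r hr (by simpa using h 0 h0)]
  · refine (S.samv hn).congr' ?_
    filter_upwards [hsub] with r ⟨hr, h⟩
    rw [hav r hr (by simpa using h 0 h0)]
    congr 2
    refine setIntegral_congr_fun measurableSet_ball fun z hz => ?_
    have hm := muBall (z := 0) hwc hw0 hr (h 0 h0)
    rw [smul_zero, add_zero] at hm
    have : (r ^ n) ≠ 0 := by positivity
    rw [hm, muBall hwc hw0 hr (h z hz), mul_div_mul_left _ _ this]
end

section
/- Let ‖·‖ be a norm on ℝⁿ with open balls B_r(x) := {y : ‖y − x‖ < r}, and let Ω ⊆ ℝⁿ be an open neighborhood of the origin 0. Let w ∈ L¹_loc(Ω, 𝓛ⁿ) satisfy: w > 0 𝓛ⁿ-a.e. on Ω; w is 𝓛ⁿ-essentially bounded on a neighborhood of 0; 0 is a Lebesgue point of w with Lebesgue value 0 (i.e. ⨍_{B_r(0)} |w| d𝓛ⁿ → 0); and esssup_{x ∈ B_r(0)} |w(x) − w(−x)| = o(r · ⨍_{B_r(0)} w d𝓛ⁿ) as r ↓ 0. Set μ := w·𝓛ⁿ, and assume that the probability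 measures ν_r := (w(r·)·rⁿ/μ(B_r(0)))·𝓛ⁿ restricted to B_1(0) converge weakly (tested against bounded continuous functions) to a measure ν as r ↓ 0. Then every function u : Ω → ℝ that is twice differentiable at 0 admits a pointwise AMV Laplacian at 0 with respect to ‖·‖ and μ, and Δ^{‖·‖}_μ u(0) = ½·Tr(M_ν · ∇²u(0)), where M_ν is the matrix with entries (M_ν)_{ij} := ∫_{B_1(0)} y_i y_j dν(y). -/
/-!
Write `B_r = {N < r}`, `m r = μ(B_r)`, and `u y - u 0 = L y + ½ H(y, y) + g y` with `L = Du(0)`,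
`H = D²u(0)`. For small `r` the ball lies in `Ω` and `w` is a.e. positive and integrable on it, so
`μ`-averages over `B_r` are `(m r)⁻¹ ∫_{B_r} w · f`. The three pieces, divided by `r²`, behave as
follows.

* Linear part (`odd_moment_aux`): `L` is odd and `B_r` symmetric, so
  `2 ∫_{B_r} w L = ∫_{B_r} (w y - w (-y)) L y`, which is at most
  `esssup |w y - w (-y)| · ‖L‖ C r · |B_r|`. After division by `r² m r` this is a constant times
  the quotient in the infinitesimal evenness hypothesis, hence tends to `0`.
* Quadratic part (`second_moment_aux`): rescaling `y ↦ r y` turns `r⁻² (m r)⁻¹ ∫_{B_r} w y_i y_j`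
  into the integral of `y_i y_j` against the blow-up measure `ν_r`. A truncation of `y_i y_j` that
  is inactive on `B_1` is bounded and continuous, so weak convergence gives the limit.
* Remainder (`taylor_two_aux`): `g y = o(‖y‖²)` since `u` is differentiable near `0` and `Du` is
  differentiable at `0`; positivity of `w` then bounds the contribution by any `ε`.
-/

open MeasureTheory Filter Metric Set
open scoped ENNReal Topology

/-! ### Norms and Taylor expansion -/

/-- A norm on a finite-dimensional space, given as a bare function, is continuous (being convex) and
dominates the ambient norm (by compactness of the unit sphere). -/
theorem norm_equiv_aux {E : Type*} [NormedAddCommGroup E] [NormedSpace ℝ E]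
    [FiniteDimensional ℝ E] (N : E → ℝ)
    (hN_add : ∀ x y, N (x + y) ≤ N x + N y)
    (hN_smul : ∀ (a : ℝ) x, N (a • x) = |a| * N x)
    (hN_zero : ∀ x, N x = 0 ↔ x = 0) :
    Continuous N ∧ ∃ C : ℝ, 0 < C ∧ ∀ x, ‖x‖ ≤ C * N x := by
  have hconv : ConvexOn ℝ univ N := by
    refine ⟨convex_univ, fun x _ y _ a b ha hb _ => ?_⟩
    calc N (a • x + b • y) ≤ N (a • x) + N (b • y) := hN_add _ _
      _ = a • N x + b • N y := by
        simp [hN_smul, abs_of_nonneg ha, abs_of_nonneg hb]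
  have hcont : Continuous N := hconv.locallyLipschitz.continuous
  refine ⟨hcont, ?_⟩
  have hnonneg : ∀ x, 0 ≤ N x := by
    intro x
    have h1 := hN_add x ((-1 : ℝ) • x)
    have h0 : N (x + (-1 : ℝ) • x) = 0 := (hN_zero _).2 (by simp)
    rw [h0, hN_smul] at h1
    norm_num at h1
    linarith
  rcases (sphere (0 : E) 1).eq_empty_or_nonempty with h | h
  · refine ⟨1, one_pos, fun x => ?_⟩
    by_cases hx : x = 0
    · subst hx
      simpa using hnonneg 0
    · exfalso
      have : ‖x‖⁻¹ • x ∈ sphere (0 : E) 1 := by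
        simp [norm_smul, hx]
      rw [h] at this
      exact this
  · obtain ⟨x₀, hx₀, hmin⟩ := (isCompact_sphere (0 : E) 1).exists_isMinOn h hcont.continuousOn
    have hx₀' : x₀ ≠ 0 := by
      rintro rfl
      simp at hx₀
    have hpos : 0 < N x₀ := lt_of_le_of_ne (hnonneg _) fun h => hx₀' ((hN_zero _).1 h.symm)
    refine ⟨(N x₀)⁻¹, by positivity, fun x => ?_⟩
    by_cases hx : x = 0
    · subst hx
      simpa using mul_nonneg (inv_nonneg.2 hpos.le) (hnonneg 0)
    · have hs : ‖x‖⁻¹ • x ∈ sphere (0 : E) 1 := by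
        simp [norm_smul, hx]
      have h2 : N x₀ ≤ N (‖x‖⁻¹ • x) := hmin hs
      have hxp : 0 < ‖x‖ := norm_pos_iff.2 hx
      rw [hN_smul, abs_of_nonneg (by positivity)] at h2
      rw [inv_mul_eq_div, le_div_iff₀ hpos]
      rw [inv_mul_eq_div, le_div_iff₀ hxp] at h2
      linarith

/-- Second-order Taylor expansion with Peano remainder, assuming only that the derivative is
differentiable at the point. By symmetry of the second derivative the remainder has derivative
`Du(z) - Du(0) - D²u(0) z = o(‖z‖)`, and the mean value inequality applies. -/
theorem taylor_two_aux {E : Type*} [NormedAddCommGroup E] [NormedSpace ℝ E] (u : E → ℝ)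
    (hu1 : ∀ᶠ y in 𝓝 (0 : E), DifferentiableAt ℝ u y)
    (hu2 : DifferentiableAt ℝ (fderiv ℝ u) 0) {ε : ℝ} (hε : 0 < ε) :
    ∀ᶠ y in 𝓝 (0 : E), |u y - u 0 - fderiv ℝ u 0 y
      - (1 / 2) * fderiv ℝ (fderiv ℝ u) 0 y y| ≤ ε * ‖y‖ ^ 2 := by
  set L := fderiv ℝ u 0
  set H := fderiv ℝ (fderiv ℝ u) 0
  have hH : HasFDerivAt (fderiv ℝ u) H 0 := hu2.hasFDerivAt
  have hsymm : ∀ v w, H v w = H w v :=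
    second_derivative_symmetric_of_eventually (hu1.mono fun y hy => hy.hasFDerivAt) hH
  have hlo := (Asymptotics.isLittleO_iff.1 (hasFDerivAt_iff_isLittleO_nhds_zero.1 hH)) hε
  obtain ⟨δ, hδ, hball⟩ := Metric.eventually_nhds_iff_ball.1 (hu1.and hlo)
  filter_upwards [ball_mem_nhds (0 : E) hδ] with y hy
  have hy' : ‖y‖ < δ := by simpa using hy
  let g : E → ℝ := fun z => u z - u 0 - L z - (1 / 2) * H z z
  have hmem : ∀ z ∈ closedBall (0 : E) ‖y‖, z ∈ ball (0 : E) δ := fun z hz => by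
    simp at hz ⊢
    linarith
  have hder : ∀ z ∈ closedBall (0 : E) ‖y‖,
      HasFDerivWithinAt g (fderiv ℝ u z - L - H z) (closedBall (0 : E) ‖y‖) z := by
    intro z hz
    have h1 := ((hball z (hmem z hz)).1).hasFDerivAt
    have h3 : HasFDerivAt (fun z => H z z) (H z + H.flip z) z := by
      have := H.hasFDerivAt_of_bilinear (hasFDerivAt_id z) (hasFDerivAt_id z)
      refine this.congr_fderiv ?_
      ext v
      simp [ContinuousLinearMap.precompR, ContinuousLinearMap.precompL]
    have h4 := ((h1.sub_const (u 0)).sub L.hasFDerivAt).sub (h3.const_mul (1 / 2 : ℝ))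
    refine (h4.congr_fderiv ?_).hasFDerivWithinAt
    ext v
    simp [hsymm v z]
    ring
  have hbound : ∀ z ∈ closedBall (0 : E) ‖y‖, ‖fderiv ℝ u z - L - H z‖ ≤ ε * ‖y‖ := by
    intro z hz
    have h1 := (hball z (hmem z hz)).2
    simp only [zero_add] at h1
    refine h1.trans ?_
    gcongr
    simpa using hz
  have := Convex.norm_image_sub_le_of_norm_hasFDerivWithin_le hder hbound
    (convex_closedBall _ _) (x := 0) (y := y) (by simp) (by simp)
  simp only [g, map_zero, sub_self, sub_zero, mul_zero, Real.norm_eq_abs] at this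
  rw [pow_two, ← mul_assoc]
  exact this

/-! ### Weighted moments on small balls -/

/-- On a symmetric set, the integral of a linear form against `w` only sees the odd part of `w`,
hence is controlled by the oscillation `|w y - w (-y)|`. -/
theorem odd_moment_aux {n : ℕ} (S : Set (EuclideanSpace ℝ (Fin n))) (hS : MeasurableSet S)
    (hSneg : ∀ y, -y ∈ S ↔ y ∈ S) (hSfin : volume S < ∞)
    (w : EuclideanSpace ℝ (Fin n) → ℝ) (L : EuclideanSpace ℝ (Fin n) →L[ℝ] ℝ)
    (hwL : IntegrableOn (fun y => w y * L y) S) {D K : ℝ}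
    (hD : ∀ᵐ y ∂volume.restrict S, |w y - w (-y)| ≤ D) (hK : ∀ y ∈ S, |L y| ≤ K) :
    |∫ y in S, w y * L y| ≤ D * K * volume.real S := by
  have hmp := Measure.measurePreserving_neg (volume : Measure (EuclideanSpace ℝ (Fin n)))
  have hemb : MeasurableEmbedding (Neg.neg : EuclideanSpace ℝ (Fin n) → _) :=
    (MeasurableEquiv.neg _).measurableEmbedding
  have hpre : Neg.neg ⁻¹' S = S := by
    ext y
    exact hSneg y
  have h1 : ∫ y in S, w (-y) * L (-y) = ∫ y in S, w y * L y := by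
    have := hmp.setIntegral_preimage_emb hemb (fun y => w y * L y) S
    rwa [hpre] at this
  have hint : IntegrableOn (fun y => w (-y) * L (-y)) S := by
    have := (hmp.integrableOn_comp_preimage hemb (f := fun y => w y * L y) (s := S)).2 hwL
    rwa [hpre] at this
  have h2 : ∫ y in S, (w y - w (-y)) * L y = 2 * ∫ y in S, w y * L y := by
    rw [two_mul]
    nth_rewrite 2 [← h1]
    rw [← integral_add hwL hint]
    congr 1 with y
    simp
    ring
  have h3 : |∫ y in S, (w y - w (-y)) * L y| ≤ D * K * volume.real S := by
    rw [← Real.norm_eq_abs]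
    refine norm_setIntegral_le_of_norm_le_const_ae hSfin ?_
    filter_upwards [hD, ae_restrict_mem hS] with y hy hyS
    rw [norm_mul]
    exact mul_le_mul hy (hK y hyS) (norm_nonneg _) ((abs_nonneg _).trans hy)
  rw [h2, abs_mul, abs_two] at h3
  linarith [abs_nonneg (∫ y in S, w y * L y)]

open scoped Pointwise in
theorem scaling_aux {n : ℕ} (N : EuclideanSpace ℝ (Fin n) → ℝ)
    (hN_smul : ∀ (a : ℝ) x, N (a • x) = |a| * N x)
    (f : EuclideanSpace ℝ (Fin n) → ℝ) {r : ℝ} (hr : 0 < r) :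
    ∫ y in {y | N y < 1}, f (r • y) = (r ^ n)⁻¹ * ∫ y in {y | N y < r}, f y := by
  rw [Measure.setIntegral_comp_smul_of_pos volume f _ hr]
  have : r • {y | N y < 1} = {y | N y < r} := by
    ext y
    rw [mem_smul_set_iff_inv_smul_mem₀ hr.ne']
    simp only [mem_ofPred_eq, hN_smul, abs_of_pos (inv_pos.2 hr)]
    rw [inv_mul_lt_iff₀ hr, mul_one]
  rw [this]
  simp

theorem quad_expand_aux {n : ℕ}
    (H : EuclideanSpace ℝ (Fin n) →L[ℝ] EuclideanSpace ℝ (Fin n) →L[ℝ] ℝ)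
    (y : EuclideanSpace ℝ (Fin n)) :
    H y y = ∑ i : Fin n, ∑ j : Fin n, (y i * y j) *
      H (EuclideanSpace.single j 1) (EuclideanSpace.single i 1) := by
  have hy : y = ∑ i, y i • EuclideanSpace.single i (1 : ℝ) := by
    have := (EuclideanSpace.basisFun (Fin n) ℝ).sum_repr y
    simpa using this.symm
  conv_lhs => rw [hy]
  simp only [map_sum, map_smul, _root_.sum_apply, _root_.smul_apply,
    smul_eq_mul, Finset.mul_sum]
  refine Finset.sum_congr rfl fun i _ => Finset.sum_congr rfl fun j _ => ?_
  ring

/-- A property holding near `0` holds on all sufficiently small `N`-balls. -/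
theorem eventually_ball_aux {E : Type*} [NormedAddCommGroup E] (N : E → ℝ) {C : ℝ} (hC : 0 < C)
    (hCN : ∀ x, ‖x‖ ≤ C * N x) {P : E → Prop} (hP : ∀ᶠ y in 𝓝 (0 : E), P y) :
    ∀ᶠ r in 𝓝[>] (0 : ℝ), ∀ y, N y < r → P y := by
  obtain ⟨δ, hδ, hball⟩ := Metric.eventually_nhds_iff_ball.1 hP
  filter_upwards [Ioo_mem_nhdsGT (show (0 : ℝ) < δ / C by positivity)] with r hr y hy
  refine hball y ?_
  have h1 : C * r < δ := by
    have := (lt_div_iff₀ hC).1 hr.2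
    linarith
  have h2 : C * N y < C * r := by gcongr
  have := hCN y
  simp only [mem_ball, dist_zero_right]
  linarith

/-- The rescaled second moments converge to those of the blow-up limit `ν`. The normalization `m` is
arbitrary here. -/
theorem second_moment_aux {n : ℕ} (N : EuclideanSpace ℝ (Fin n) → ℝ) (hNc : Continuous N)
    (hN_smul : ∀ (a : ℝ) x, N (a • x) = |a| * N x)
    {C : ℝ} (hC : 0 < C) (hCN : ∀ x, ‖x‖ ≤ C * N x)
    (w : EuclideanSpace ℝ (Fin n) → ℝ) (m : ℝ → ℝ)
    (ν : Measure (EuclideanSpace ℝ (Fin n))) (hνsupp : ν {y | 1 ≤ N y} = 0)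
    (hν : ∀ φ : EuclideanSpace ℝ (Fin n) → ℝ, Continuous φ → (∃ M : ℝ, ∀ y, |φ y| ≤ M) →
      Tendsto (fun r : ℝ => ∫ y in {y | N y < 1}, φ y * (w (r • y) * r ^ n / m r) ∂volume)
        (𝓝[>] (0 : ℝ)) (𝓝 (∫ y, φ y ∂ν))) (i j : Fin n) :
    Tendsto (fun r : ℝ => (1 / r ^ 2) * ((m r)⁻¹ * ∫ y in {y | N y < r}, w y * (y i * y j)))
      (𝓝[>] (0 : ℝ)) (𝓝 (∫ y in {y | N y < 1}, y i * y j ∂ν)) := by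
  have hmeas : ∀ r, MeasurableSet {y | N y < r} := fun r =>
    (isOpen_lt hNc continuous_const).measurableSet
  -- `|y i * y j| ≤ C ^ 2` on the unit `N`-ball, so truncating at `C ^ 2` changes nothing there.
  let φ : EuclideanSpace ℝ (Fin n) → ℝ := fun y => max (-(C ^ 2)) (min (C ^ 2) (y i * y j))
  have hφc : Continuous φ := by fun_prop
  have hφb : ∀ y, |φ y| ≤ C ^ 2 := fun y =>
    abs_le.2 ⟨le_max_left _ _, max_le (by nlinarith [sq_nonneg C]) (min_le_left _ _)⟩
  have hφeq : ∀ y ∈ {y | N y < 1}, φ y = y i * y j := by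
    intro y hy
    have hy1 : ‖y‖ ≤ C := (hCN y).trans (by
      have : N y < 1 := hy
      nlinarith)
    have hi : |y i| ≤ C := (PiLp.norm_apply_le y i).trans hy1
    have hj : |y j| ≤ C := (PiLp.norm_apply_le y j).trans hy1
    have hij : |y i * y j| ≤ C ^ 2 := by
      rw [abs_mul, pow_two]
      gcongr
    have := abs_le.1 hij
    simp only [φ]
    rw [min_eq_right this.2, max_eq_right this.1]
  have hlim := hν φ hφc ⟨_, hφb⟩
  have hνeq : ∫ y, φ y ∂ν = ∫ y in {y | N y < 1}, y i * y j ∂ν := by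
    have : ν.restrict {y | N y < 1} = ν := by
      refine Measure.restrict_eq_self_of_ae_mem ?_
      rw [ae_iff]
      simpa using hνsupp
    rw [← setIntegral_congr_fun (hmeas 1) hφeq, this]
  rw [hνeq] at hlim
  refine hlim.congr' ?_
  filter_upwards [self_mem_nhdsWithin] with r hr
  have hr : 0 < r := hr
  have h1 := scaling_aux N hN_smul (fun y => w y * (y i * y j)) hr
  have h2 : ∫ y in {y | N y < 1}, φ y * (w (r • y) * r ^ n / m r) =
      ∫ y in {y | N y < 1}, (r ^ n / m r / r ^ 2) *
        (w (r • y) * ((r • y) i * (r • y) j)) := by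
    refine setIntegral_congr_fun (hmeas 1) fun y hy => ?_
    simp only [hφeq y hy, PiLp.smul_apply, smul_eq_mul]
    field_simp
  rw [h2, integral_const_mul, h1]
  field_simp

/-! ### The pointwise AMV Laplacian -/

/-- Let `‖·‖ = N` be a norm on `ℝⁿ` with balls `B_r(x) = {y : N(y−x) < r}`,
`Ω` an open neighborhood of `0`, and `w ∈ L¹_loc(Ω)` a vanishing weight at `0` (a.e. positive,
essentially bounded near `0`, Lebesgue value `0` at `0`) which is infinitesimally even at `0`.
Set `μ = w 𝓛ⁿ ⌞ Ω` and assume the blow-up measures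
`ν_r = (w(r·) rⁿ / μ(B_r(0))) 𝓛ⁿ ⌞ B_1(0)` converge weakly to a measure `ν` supported in
`B_1(0)`.  Then every `u` twice differentiable at `0` admits a pointwise AMV Laplacian at `0`,
equal to `½ Tr(M_ν ∇²u(0))` with `(M_ν)_{ij} = ∫_{B_1(0)} y_i y_j dν`. -/
theorem stmt_16 {n : ℕ} (hn : 0 < n)
    (N : EuclideanSpace ℝ (Fin n) → ℝ)
    (hN_add : ∀ x y, N (x + y) ≤ N x + N y)
    (hN_smul : ∀ (a : ℝ) x, N (a • x) = |a| * N x)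
    (hN_zero : ∀ x, N x = 0 ↔ x = 0)
    (Ω : Set (EuclideanSpace ℝ (Fin n))) (hΩ : IsOpen Ω) (h0 : (0 : EuclideanSpace ℝ (Fin n)) ∈ Ω)
    (w : EuclideanSpace ℝ (Fin n) → ℝ)
    (hwloc : LocallyIntegrableOn w Ω volume)
    (hwpos : ∀ᵐ y ∂volume.restrict Ω, 0 < w y)
    (hwbdd : ∃ V ∈ 𝓝 (0 : EuclideanSpace ℝ (Fin n)), eLpNorm w ∞ (volume.restrict V) < ∞)
    (hwleb : Tendsto (fun r : ℝ => ⨍ y in {y | N y < r}, |w y| ∂volume)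
      (𝓝[>] (0 : ℝ)) (𝓝 0))
    (hweven : Tendsto (fun r : ℝ =>
        (eLpNorm (fun y => w y - w (-y)) ∞ (volume.restrict {y | N y < r})).toReal /
          (r * ⨍ y in {y | N y < r}, w y ∂volume))
      (𝓝[>] (0 : ℝ)) (𝓝 0))
    (μ : Measure (EuclideanSpace ℝ (Fin n)))
    (hμdef : μ = (volume.restrict Ω).withDensity fun y => ENNReal.ofReal (w y))
    (ν : Measure (EuclideanSpace ℝ (Fin n)))
    (hνsupp : ν {y | 1 ≤ N y} = 0)
    (hν : ∀ φ : EuclideanSpace ℝ (Fin n) → ℝ, Continuous φ → (∃ M : ℝ, ∀ y, |φ y| ≤ M) →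
      Tendsto (fun r : ℝ => ∫ y in {y | N y < 1},
          φ y * (w (r • y) * r ^ n / (μ {z | N z < r}).toReal) ∂volume)
        (𝓝[>] (0 : ℝ)) (𝓝 (∫ y, φ y ∂ν)))
    (u : EuclideanSpace ℝ (Fin n) → ℝ)
    (hu1 : ∀ᶠ y in 𝓝 (0 : EuclideanSpace ℝ (Fin n)), DifferentiableAt ℝ u y)
    (hu2 : DifferentiableAt ℝ (fderiv ℝ u) 0) :
    Tendsto (fun r : ℝ => (1 / r ^ 2) * ⨍ y in {y | N y < r}, (u y - u 0) ∂μ)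
      (𝓝[>] (0 : ℝ))
      (𝓝 ((1 / 2) * ∑ i : Fin n, ∑ j : Fin n,
        (∫ y in {y | N y < 1}, y i * y j ∂ν) *
          fderiv ℝ (fderiv ℝ u) 0 (EuclideanSpace.single j 1) (EuclideanSpace.single i 1))) := by
  obtain ⟨hNc, C, hC, hCN⟩ := norm_equiv_aux N hN_add hN_smul hN_zero
  have hopen : ∀ r, IsOpen {y | N y < r} := fun r => isOpen_lt hNc continuous_const
  have hmeas : ∀ r, MeasurableSet {y | N y < r} := fun r => (hopen r).measurableSet
  have hNneg : ∀ y, N (-y) = N y := fun y => by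
    have := hN_smul (-1) y
    simpa using this
  set L := fderiv ℝ u 0
  set H := fderiv ℝ (fderiv ℝ u) 0
  let m : ℝ → ℝ := fun r => (μ {z | N z < r}).toReal
  let g : EuclideanSpace ℝ (Fin n) → ℝ := fun y => u y - u 0 - L y - (1 / 2) * H y y
  obtain ⟨V, hV, hwV⟩ := hwbdd
  obtain ⟨U, hU, hwU⟩ := hwloc 0 h0
  rw [hΩ.nhdsWithin_eq h0] at hU
  obtain ⟨δ, hδ, hball⟩ := Metric.nhds_basis_closedBall.mem_iff.1
    (inter_mem (inter_mem hU (hΩ.mem_nhds h0)) (inter_mem hV hu1))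
  have hsmall : ∀ᶠ r in 𝓝[>] (0 : ℝ), {y | N y < r} ⊆ closedBall 0 δ :=
    eventually_ball_aux N hC hCN (closedBall_mem_nhds 0 hδ)
  have hwK : IntegrableOn w (closedBall 0 δ) := hwU.mono_set fun y hy => (hball hy).1.1
  have hint : ∀ f : EuclideanSpace ℝ (Fin n) → ℝ, ContinuousOn f (closedBall 0 δ) →
      IntegrableOn (fun y => w y * f y) (closedBall 0 δ) := fun f hf =>
    hwK.mul_continuousOn hf (isCompact_closedBall _ _)
  have huc : ContinuousOn u (closedBall 0 δ) := fun y hy =>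
    (DifferentiableAt.continuousAt (hball hy).2.2).continuousWithinAt
  have hHc : Continuous fun y => H y y := by fun_prop
  have hgc : ContinuousOn g (closedBall 0 δ) :=
    ((huc.sub continuousOn_const).sub L.continuous.continuousOn).sub
      (hHc.const_mul (1 / 2 : ℝ)).continuousOn
  have hfin : ∀ {r}, {y | N y < r} ⊆ closedBall 0 δ → volume {y | N y < r} < ∞ := fun h =>
    (measure_mono h).trans_lt measure_closedBall_lt_top
  have hpos : ∀ {r}, {y | N y < r} ⊆ closedBall 0 δ →
      ∀ᵐ y ∂volume.restrict {y | N y < r}, 0 < w y := fun h =>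
    ae_restrict_of_ae_restrict_of_subset (h.trans fun y hy => (hball hy).1.2) hwpos
  have hdens : ∀ {r}, {y | N y < r} ⊆ closedBall 0 δ → μ.restrict {y | N y < r} =
      (volume.restrict {y | N y < r}).withDensity fun y => ENNReal.ofReal (w y) := by
    intro r h
    rw [hμdef, restrict_withDensity (hmeas r), Measure.restrict_restrict_of_subset
      (h.trans fun y hy => (hball hy).1.2)]
  have hm : ∀ {r}, {y | N y < r} ⊆ closedBall 0 δ → m r = ∫ y in {y | N y < r}, w y := by
    intro r h
    have h1 : μ {y | N y < r} = (μ.restrict {y | N y < r}) univ := by simp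
    simp only [m]
    rw [h1, hdens h, withDensity_apply _ MeasurableSet.univ, Measure.restrict_univ,
      ← ofReal_integral_eq_lintegral_ofReal (hwK.mono_set h) ((hpos h).mono fun y hy => hy.le),
      ENNReal.toReal_ofReal (integral_nonneg_of_ae ((hpos h).mono fun y hy => hy.le))]
  have hN0 : N 0 = 0 := (hN_zero 0).2 rfl
  have hvol : ∀ {r}, 0 < r → 0 < volume {y | N y < r} := fun {r} hr =>
    (hopen r).measure_pos volume ⟨0, by simpa [hN0] using hr⟩
  have hmpos : ∀ {r}, 0 < r → {y | N y < r} ⊆ closedBall 0 δ → 0 < m r := by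
    intro r hr h
    rw [hm h, integral_pos_iff_support_of_nonneg_ae ((hpos h).mono fun y hy => hy.le)
      (hwK.mono_set h)]
    have h1 : (Function.support w : Set _) =ᵐ[volume.restrict {y | N y < r}] (univ : Set _) := by
      rw [eventuallyEq_univ]
      filter_upwards [hpos h] with y hy using hy.ne'
    rw [measure_congr h1]
    simpa using hvol hr
  have hμint : ∀ {r}, {y | N y < r} ⊆ closedBall 0 δ → ∀ f : EuclideanSpace ℝ (Fin n) → ℝ,
      ⨍ y in {y | N y < r}, f y ∂μ = (m r)⁻¹ * ∫ y in {y | N y < r}, w y * f y := by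
    intro r h f
    rw [setAverage_eq, smul_eq_mul, hdens h, integral_withDensity_eq_integral_toReal_smul₀
      (hwK.mono_set h).aemeasurable.ennreal_ofReal (by simp)]
    congr 1
    refine integral_congr_ae ?_
    filter_upwards [hpos h] with y hy
    rw [ENNReal.toReal_ofReal hy.le, smul_eq_mul]
  -- The linear part vanishes in the limit, because `w` is infinitesimally even.
  have hA : Tendsto (fun r : ℝ => (1 / r ^ 2) * ((m r)⁻¹ * ∫ y in {y | N y < r}, w y * L y))
      (𝓝[>] (0 : ℝ)) (𝓝 0) := by
    have hlim := hweven.const_mul (‖L‖ * C)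
    rw [mul_zero] at hlim
    refine squeeze_zero_norm' ?_ hlim
    filter_upwards [hsmall, self_mem_nhdsWithin] with r h hr
    have hr : 0 < r := hr
    set D := eLpNorm (fun y => w y - w (-y)) ∞ (volume.restrict {y | N y < r}) with hDdef
    have hDfin : D < ∞ := by
      have hw1 : MemLp w ∞ (volume.restrict {y | N y < r}) :=
        ⟨(hwK.mono_set h).aestronglyMeasurable, (eLpNorm_mono_measure w
          (Measure.restrict_mono_set _ (h.trans fun y hy => (hball hy).2.1))).trans_lt hwV⟩
      have hmp := (Measure.measurePreserving_neg
        (volume : Measure (EuclideanSpace ℝ (Fin n)))).restrict_preimage (hmeas r)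
      have hpre : Neg.neg ⁻¹' {y | N y < r} = {y | N y < r} := by
        ext y
        simp [hNneg]
      rw [hpre] at hmp
      exact (hw1.sub (hw1.comp_measurePreserving hmp)).eLpNorm_lt_top
    -- Finiteness of `D` is what makes the bound by `D.toReal` meaningful.
    have hDae : ∀ᵐ y ∂volume.restrict {y | N y < r}, |w y - w (-y)| ≤ D.toReal := by
      have := ae_le_eLpNormEssSup (f := fun y => w y - w (-y))
        (μ := volume.restrict {y | N y < r})
      filter_upwards [this] with y hy
      rw [← eLpNorm_exponent_top] at hy
      have := ENNReal.toReal_mono hDfin.ne hy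
      simpa using this
    have hLb : ∀ y ∈ {y | N y < r}, |L y| ≤ ‖L‖ * (C * r) := fun y hy => by
      refine (L.le_opNorm y).trans ?_
      have hy : N y < r := hy
      gcongr
      exact (hCN y).trans (by gcongr)
    have hodd := odd_moment_aux {y | N y < r} (hmeas r) (fun y => by simp [hNneg]) (hfin h) w L
      ((hint L L.continuous.continuousOn).mono_set h) hDae hLb
    have hmp := hmpos hr h
    have hvp : 0 < volume.real {y | N y < r} := ENNReal.toReal_pos (hvol hr).ne' (hfin h).ne
    rw [setAverage_eq, ← hm h, smul_eq_mul, norm_mul, norm_mul, Real.norm_of_nonneg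
      (by positivity : 0 ≤ 1 / r ^ 2), Real.norm_of_nonneg (by positivity : 0 ≤ (m r)⁻¹),
      Real.norm_eq_abs]
    calc 1 / r ^ 2 * ((m r)⁻¹ * |∫ y in {y | N y < r}, w y * L y|)
        ≤ 1 / r ^ 2 * ((m r)⁻¹ * (D.toReal * (‖L‖ * (C * r)) * volume.real {y | N y < r})) := by
          gcongr
      _ = _ := by
          field_simp
  -- The Taylor remainder is at most `ε / 2 * r ^ 2` on `B_r`, and `w` is positive there.
  have hR : Tendsto (fun r : ℝ => (1 / r ^ 2) * ((m r)⁻¹ * ∫ y in {y | N y < r}, w y * g y))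
      (𝓝[>] (0 : ℝ)) (𝓝 0) := by
    rw [Metric.tendsto_nhds]
    intro ε hε
    have hT := eventually_ball_aux N hC hCN
      (taylor_two_aux u hu1 hu2 (show 0 < ε / (2 * C ^ 2) by positivity))
    filter_upwards [hT, hsmall, self_mem_nhdsWithin] with r hTr h hr
    have hr : 0 < r := hr
    have hmp := hmpos hr h
    have hb : |∫ y in {y | N y < r}, w y * g y| ≤ (ε / 2 * r ^ 2) * m r := by
      rw [hm h, ← integral_const_mul, ← Real.norm_eq_abs]
      refine norm_integral_le_of_norm_le ((hwK.mono_set h).const_mul _) ?_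
      filter_upwards [hpos h, ae_restrict_mem (hmeas r)] with y hy hyr
      rw [norm_mul, Real.norm_of_nonneg hy.le, mul_comm]
      gcongr
      have hyr : N y < r := hyr
      have hyn : ‖y‖ ≤ C * r := (hCN y).trans (by gcongr)
      calc ‖g y‖ ≤ ε / (2 * C ^ 2) * ‖y‖ ^ 2 := hTr y hyr
        _ ≤ ε / (2 * C ^ 2) * (C * r) ^ 2 := by gcongr
        _ = ε / 2 * r ^ 2 := by field_simp
    rw [Real.dist_eq, sub_zero, abs_mul, abs_mul, abs_of_pos (by positivity : 0 < 1 / r ^ 2),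
      abs_of_pos (inv_pos.2 hmp)]
    calc 1 / r ^ 2 * ((m r)⁻¹ * |∫ y in {y | N y < r}, w y * g y|)
        ≤ 1 / r ^ 2 * ((m r)⁻¹ * ((ε / 2 * r ^ 2) * m r)) := by gcongr
      _ = ε / 2 := by field_simp
      _ < ε := by linarith
  have hQ : Tendsto (fun r : ℝ => (1 / 2) * ∑ i : Fin n, ∑ j : Fin n,
        ((1 / r ^ 2) * ((m r)⁻¹ * ∫ y in {y | N y < r}, w y * (y i * y j))) *
          H (EuclideanSpace.single j 1) (EuclideanSpace.single i 1))
      (𝓝[>] (0 : ℝ)) (𝓝 ((1 / 2) * ∑ i : Fin n, ∑ j : Fin n,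
        (∫ y in {y | N y < 1}, y i * y j ∂ν) *
          H (EuclideanSpace.single j 1) (EuclideanSpace.single i 1))) :=
    (tendsto_finsetSum _ fun i _ => tendsto_finsetSum _ fun j _ =>
      (second_moment_aux N hNc hN_smul hC hCN w m ν hνsupp hν i j).mul_const _).const_mul _
  have hsum := (hA.add hQ).add hR
  rw [zero_add, add_zero] at hsum
  refine hsum.congr' ?_
  filter_upwards [hsmall] with r h
  have hi1 := (hint L L.continuous.continuousOn).mono_set h
  have hi2 := (hint (fun y => H y y) hHc.continuousOn).mono_set h
  have hi3 := (hint g hgc).mono_set h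
  have hquad : ∫ y in {y | N y < r}, w y * H y y = ∑ i : Fin n, ∑ j : Fin n,
      (∫ y in {y | N y < r}, w y * (y i * y j)) *
        H (EuclideanSpace.single j 1) (EuclideanSpace.single i 1) := by
    have hij : ∀ i j : Fin n, IntegrableOn (fun y => w y * (y i * y j) *
        H (EuclideanSpace.single j 1) (EuclideanSpace.single i 1)) {y | N y < r} := fun i j =>
      ((hint (fun y => y i * y j) (by fun_prop)).mono_set h).mul_const _
    simp_rw [← integral_mul_const]
    simp_rw [← integral_finsetSum _ fun j _ => hij _ j]
    rw [← integral_finsetSum _ fun i _ => integrable_finsetSum _ fun j _ => hij i j]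
    congr 1 with y
    rw [quad_expand_aux H y]
    simp only [Finset.mul_sum]
    refine Finset.sum_congr rfl fun i _ => Finset.sum_congr rfl fun j _ => ?_
    ring
  rw [hμint h]
  have hsplit : ∫ y in {y | N y < r}, w y * (u y - u 0) =
      (∫ y in {y | N y < r}, w y * L y) + (1 / 2) * (∫ y in {y | N y < r}, w y * H y y)
        + ∫ y in {y | N y < r}, w y * g y := by
    have hi12 : IntegrableOn (fun y => w y * L y + (1 / 2) * (w y * H y y)) {y | N y < r} :=
      hi1.add (hi2.const_mul _)
    rw [← integral_const_mul, ← integral_add hi1 (hi2.const_mul _), ← integral_add hi12 hi3]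
    congr 1 with y
    simp only [g]
    ring
  rw [hsplit, hquad, mul_add, mul_add, mul_add, mul_add]
  congr 2
  simp only [Finset.mul_sum]
  refine Finset.sum_congr rfl fun i _ => Finset.sum_congr rfl fun j _ => ?_
  ring
end

section
/- Let ‖·‖ be a norm on ℝⁿ with open balls B_r(x) := {y : ‖y − x‖ < r}, and let Ω ⊆ ℝⁿ be an open neighborhood of the origin 0. Let w ∈ L¹_loc(Ω, 𝓛ⁿ) satisfy: w > 0 𝓛ⁿ-a.e. on Ω; w is 𝓛ⁿ-essentially bounded on a neighborhood of 0; 0 is a Lebesgue point of w with Lebesgue value 0; and esssup_{x ∈ B_r(0)} |w(x) − w(−x)| = o(r · ⨍_{B_r(0)} w d𝓛ⁿ) as r ↓ 0. Set μ := w·𝓛ⁿ and assume: (a) μ satisfies a comparability condition at 0, i.e. there exist r₀, C > 0 such that μ(B_r(0)) ≤ C·μ(B_r(y)) for every r ∈ (0,r₀) and 𝓛ⁿ-a.e. y ∈ B_r(0); (b) the r-dependent weights w̃_r(y) := (w(y)/2)·(1 + μ(B_r(0))/μ(B_r(y))) satisfy esssup_{x ∈ B_r(0)} |w̃_r(x)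 − w̃_r(−x)| = o(r · ⨍_{B_r(0)} w̃_r d𝓛ⁿ) as r ↓ 0; and (c) the measures ν̃_r := (w̃_r(r·)·rⁿ/μ(B_r(0)))·𝓛ⁿ restricted to B_1(0) converge weakly (tested against bounded continuous functions) to a measure ν̃ as r ↓ 0. Then every function u : Ω → ℝ that is twice differentiable at 0 admits a pointwise SAMV Laplacian at 0 with respect to ‖·‖ and μ, and Δ̃^{‖·‖}_μ u(0) = ½·Tr(M_{ν̃} · ∇²u(0)), where (M_{ν̃})_{ij} := ∫_{B_1(0)} y_i y_j dν̃(y). -/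
/-!
On a small ball `B_r` the operator equals `(μ(B_r) r²)⁻¹ ∫_{B_r} (u - u(0)) w̃_r d𝓛ⁿ` (`samv_eq`).
Insert the second-order Taylor formula `u(y) - u(0) = L y + ½ Q(y, y) + o(‖y‖²)` (`taylor_two`).

* The linear form `L` only sees the odd part of `w̃_r` (`odd_integral_bound`), which by
  infinitesimal evenness is `o(r ⨍ w̃_r)`; this is exactly enough to beat the factor `r⁻²`.
* The quadratic part is `½ ∫_{B_1} Q(z, z) dν̃_r(z)` after rescaling (`blowup`), and converges by
  weak convergence, applied to a bounded continuous extension of `Q` from `B_1`; its limit is the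
  trace pairing (`trace_identity`).
* The remainder is negligible because comparability gives `w/2 ≤ w̃_r ≤ (1 + C) w / 2` almost
  everywhere on `B_r` (`wtilde_facts`), so that `∫_{B_r} w̃_r / μ(B_r)` is bounded.

Weak convergence is expressed by Bochner integrals, so finiteness of `ν̃` has to be derived: the
masses of the `ν̃_r` are at least `1/2`, so the integral of `1` against `ν̃` is nonzero, hence not
a junk value.
-/

open MeasureTheory Filter Metric Set
open scoped ENNReal Topology

/-- The symmetrized weight `w̃_r(y) = (w(y)/2)(1 + μ(B_r(0))/μ(B_r(y)))` associated with a
weight `w`, the measure `μ = w 𝓛ⁿ` and the balls of a norm `N`. -/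
noncomputable def wtilde {n : ℕ} (N : EuclideanSpace ℝ (Fin n) → ℝ)
    (μ : Measure (EuclideanSpace ℝ (Fin n))) (w : EuclideanSpace ℝ (Fin n) → ℝ)
    (r : ℝ) (y : EuclideanSpace ℝ (Fin n)) : ℝ :=
  (w y / 2) * (1 + (μ {z | N z < r}).toReal / (μ {z | N (z - y) < r}).toReal)

/-! ### Norm equivalence, Taylor expansion and the linear part -/

theorem norm_facts {n : ℕ} (N : EuclideanSpace ℝ (Fin n) → ℝ)
    (hN_add : ∀ x y, N (x + y) ≤ N x + N y)
    (hN_smul : ∀ (a : ℝ) x, N (a • x) = |a| * N x)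
    (hN_zero : ∀ x, N x = 0 ↔ x = 0) :
    Continuous N ∧ ∃ c : ℝ, 0 < c ∧ ∀ x, ‖x‖ ≤ c * N x := by
  let p : Seminorm ℝ (EuclideanSpace ℝ (Fin n)) := Seminorm.of N hN_add hN_smul
  have hp : ∀ x, p x = N x := fun x => rfl
  have hnn : ∀ x, 0 ≤ N x := fun x => apply_nonneg p x
  have hle : ∀ x, N x ≤ (∑ i, N (EuclideanSpace.single i 1)) * ‖x‖ := by
    intro x
    have hx : x = ∑ i, x i • EuclideanSpace.single i (1 : ℝ) := by
      ext j
      simp [Finset.sum_apply, Pi.single_apply]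
    calc N x = p (∑ i, x i • EuclideanSpace.single i (1 : ℝ)) := by rw [← hx, hp]
      _ ≤ ∑ i, p (x i • EuclideanSpace.single i (1 : ℝ)) :=
          Finset.le_sum_of_subadditive p (map_zero p).le (map_add_le_add p) _ _
      _ ≤ ∑ i, N (EuclideanSpace.single i 1) * ‖x‖ := by
          refine Finset.sum_le_sum fun i _ => ?_
          rw [hp, hN_smul, mul_comm]
          exact mul_le_mul_of_nonneg_left (PiLp.norm_apply_le x i) (hnn _)
      _ = _ := by rw [Finset.sum_mul]
  have hcont : Continuous N := by
    refine (LipschitzWith.of_dist_le_mul (K := (∑ i, N (EuclideanSpace.single i 1)).toNNReal)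
      fun x y => ?_).continuous
    rw [Real.coe_toNNReal _ (Finset.sum_nonneg fun i _ => hnn _), Real.dist_eq, dist_eq_norm]
    exact (abs_sub_map_le_sub p x y).trans (hle _)
  refine ⟨hcont, ?_⟩
  rcases (sphere (0 : EuclideanSpace ℝ (Fin n)) 1).eq_empty_or_nonempty with he | hne
  · refine ⟨1, one_pos, fun x => ?_⟩
    by_cases hx : x = 0
    · simp [hx, hnn]
    · exfalso
      have : ‖x‖⁻¹ • x ∈ sphere (0 : EuclideanSpace ℝ (Fin n)) 1 := by
        simp [norm_smul, hx]
      rw [he] at this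
      exact this
  · obtain ⟨z, hz, hmin⟩ := (isCompact_sphere (0 : EuclideanSpace ℝ (Fin n)) 1).exists_isMinOn hne
      hcont.continuousOn
    have hz0 : z ≠ 0 := by
      rintro rfl
      simp at hz
    have hzpos : 0 < N z := lt_of_le_of_ne (hnn z) fun h => hz0 ((hN_zero z).1 h.symm)
    refine ⟨(N z)⁻¹, inv_pos.2 hzpos, fun x => ?_⟩
    by_cases hx : x = 0
    · simp [hx, (hN_zero 0).2 rfl]
    · have hxn : 0 < ‖x‖ := norm_pos_iff.2 hx
      have : N z ≤ N (‖x‖⁻¹ • x) := hmin (by simp [norm_smul, hx])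
      rw [hN_smul, abs_of_pos (inv_pos.2 hxn), le_inv_mul_iff₀ hxn] at this
      rw [le_inv_mul_iff₀ hzpos, mul_comm]
      exact this

/-- Second-order Taylor formula with Peano remainder. Symmetry of the Hessian makes
`fderiv u y - fderiv u 0 - D²u(0) y` the derivative of the remainder, and the mean value
inequality integrates its `o(‖y‖)` bound. -/
theorem taylor_two {E : Type*} [NormedAddCommGroup E] [NormedSpace ℝ E] (u : E → ℝ)
    (hu1 : ∀ᶠ y in 𝓝 (0 : E), DifferentiableAt ℝ u y)
    (hu2 : DifferentiableAt ℝ (fderiv ℝ u) 0) {ε : ℝ} (hε : 0 < ε) :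
    ∀ᶠ y in 𝓝 (0 : E),
      |u y - u 0 - fderiv ℝ u 0 y - 1 / 2 * fderiv ℝ (fderiv ℝ u) 0 y y| ≤ ε * ‖y‖ ^ 2 := by
  set L := fderiv ℝ u 0
  set Q := fderiv ℝ (fderiv ℝ u) 0 with hQ
  have hsymm : ∀ v w, Q v w = Q w v :=
    second_derivative_symmetric_of_eventually
      (hu1.mono fun y hy => hy.hasFDerivAt) hu2.hasFDerivAt
  have hlo := (hu2.hasFDerivAt.isLittleO).def hε
  obtain ⟨δ, hδ, hball⟩ := Metric.eventually_nhds_iff_ball.1 (hu1.and hlo)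
  refine Metric.eventually_nhds_iff_ball.2 ⟨δ, hδ, fun y hy => ?_⟩
  let h : E → ℝ := fun y => u y - u 0 - L y - 1 / 2 * Q y y
  have hy' : ‖y‖ < δ := by simpa using hy
  have hder : ∀ x ∈ closedBall (0 : E) ‖y‖,
      HasFDerivWithinAt h (fderiv ℝ u x - L - Q x) (closedBall (0 : E) ‖y‖) x := by
    intro x hx
    have hx' : x ∈ ball (0 : E) δ := by
      simp at hx ⊢
      linarith
    have h1 := (hball x hx').1.hasFDerivAt
    have h2 : HasFDerivAt (fun y => Q y y) _ x :=
      HasFDerivAt.clm_apply (Q.hasFDerivAt) (hasFDerivAt_id x)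
    have h3 := (((h1.sub_const (u 0)).sub L.hasFDerivAt).sub (h2.const_mul (1 / 2))).hasFDerivWithinAt
      (s := closedBall (0 : E) ‖y‖)
    refine h3.congr_fderiv ?_
    ext v
    simp [hsymm v x]
    ring
  have hb : ∀ x ∈ closedBall (0 : E) ‖y‖, ‖fderiv ℝ u x - L - Q x‖ ≤ ε * ‖y‖ := by
    intro x hx
    have hx1 : ‖x‖ ≤ ‖y‖ := by simpa using hx
    have hx' : x ∈ ball (0 : E) δ := by
      simp
      linarith
    have := (hball x hx').2
    rw [sub_zero] at this
    exact this.trans (by gcongr)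
  have := (convex_closedBall (0 : E) ‖y‖).norm_image_sub_le_of_norm_hasFDerivWithin_le hder hb
    (x := 0) (y := y) (by simp) (by simp)
  have h00 : h 0 = 0 := by simp [h]
  rw [h00, sub_zero, sub_zero] at this
  calc |u y - u 0 - L y - 1 / 2 * Q y y| = ‖h y‖ := rfl
    _ ≤ _ := this.trans_eq (by ring)

/-- Only the odd part of a density contributes to the integral of a linear form over a
symmetric set, so the integral is controlled by the evenness defect of the density. -/
theorem odd_integral_bound {n : ℕ} (B : Set (EuclideanSpace ℝ (Fin n))) (hB : MeasurableSet B)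
    (hsymm : ∀ y, -y ∈ B ↔ y ∈ B) (hfin : volume B < ∞)
    (g : EuclideanSpace ℝ (Fin n) → ℝ) (hg : IntegrableOn g B)
    (hK : eLpNorm (fun y => g y - g (-y)) ∞ (volume.restrict B) < ∞)
    (L : EuclideanSpace ℝ (Fin n) →L[ℝ] ℝ) {D : ℝ} (hL : ∀ y ∈ B, |L y| ≤ D) :
    |∫ y in B, L y * g y| ≤
      1 / 2 * (D * (eLpNorm (fun y => g y - g (-y)) ∞ (volume.restrict B)).toReal
        * volume.real B) := by
  have hpre : (Neg.neg : EuclideanSpace ℝ (Fin n) → _) ⁻¹' B = B := by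
    ext y
    exact hsymm y
  have hmp := Measure.measurePreserving_neg (volume : Measure (EuclideanSpace ℝ (Fin n)))
  have hemb : MeasurableEmbedding (Neg.neg : EuclideanSpace ℝ (Fin n) → _) :=
    (MeasurableEquiv.neg _).measurableEmbedding
  have hneg : ∫ y in B, L y * g (-y) = - ∫ y in B, L y * g y := by
    have := hmp.setIntegral_preimage_emb hemb (fun y => L y * g y) B
    rw [hpre] at this
    rw [← this, ← integral_neg]
    simp
  have hgn : IntegrableOn (fun y => g (-y)) B := by
    have := (hmp.integrableOn_comp_preimage hemb (f := g) (s := B)).2 hg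
    rw [hpre] at this
    exact this
  have hLb : ∀ᵐ y ∂volume.restrict B, ‖L y‖ ≤ D := by
    filter_upwards [ae_restrict_mem hB] with y hy using hL y hy
  have i1 : IntegrableOn (fun y => L y * g y) B :=
    Integrable.bdd_mul hg L.continuous.aestronglyMeasurable hLb
  have i2 : IntegrableOn (fun y => L y * g (-y)) B :=
    Integrable.bdd_mul hgn L.continuous.aestronglyMeasurable hLb
  have heq : ∫ y in B, L y * g y = 1 / 2 * ∫ y in B, L y * (g y - g (-y)) := by
    simp_rw [mul_sub]
    rw [integral_sub i1 i2, hneg]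
    ring
  set K := eLpNorm (fun y => g y - g (-y)) ∞ (volume.restrict B) with hKdef
  have hae : ∀ᵐ y ∂volume.restrict B, ‖L y * (g y - g (-y))‖ ≤ D * K.toReal := by
    have h := ae_le_eLpNormEssSup (f := fun y => g y - g (-y)) (μ := volume.restrict B)
    rw [← eLpNorm_exponent_top, ← hKdef] at h
    filter_upwards [h, hLb] with y hy hy2
    rw [norm_mul]
    refine mul_le_mul hy2 ?_ (norm_nonneg _) ((norm_nonneg _).trans hy2)
    have := ENNReal.toReal_mono hK.ne hy
    simpa using this
  rw [heq, abs_mul, abs_of_pos (by norm_num : (0 : ℝ) < 1 / 2)]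
  gcongr
  exact norm_setIntegral_le_of_norm_le_const_ae hfin hae

/-! ### The weights `w̃_r` on small balls -/

/-- On a small ball `B_r`, comparability makes `w̃_r` comparable to `w`; both are integrable there,
and the weight integrates to `μ(B_r) > 0`. -/
theorem wtilde_facts {n : ℕ} (N : EuclideanSpace ℝ (Fin n) → ℝ) (hN0 : N 0 = 0)
    (hNc : Continuous N) (Ω : Set (EuclideanSpace ℝ (Fin n)))
    (w : EuclideanSpace ℝ (Fin n) → ℝ)
    (hwpos : ∀ᵐ y ∂volume.restrict Ω, 0 < w y)
    (μ : Measure (EuclideanSpace ℝ (Fin n)))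
    (hμdef : μ = (volume.restrict Ω).withDensity fun y => ENNReal.ofReal (w y))
    {r C : ℝ} (hr : 0 < r) (hC : 0 < C) (hsub : {y | N y < r} ⊆ Ω)
    (hint : IntegrableOn w {y | N y < r})
    (hcomp : ∀ᵐ y ∂volume.restrict {z | N z < r},
        μ {z | N z < r} ≤ ENNReal.ofReal C * μ {z | N (z - y) < r}) :
    μ.restrict {y | N y < r}
        = (volume.restrict {y | N y < r}).withDensity (fun y => ENNReal.ofReal (w y)) ∧
    (μ {z | N z < r}).toReal = ∫ y in {y | N y < r}, w y ∧
    0 < ∫ y in {y | N y < r}, w y ∧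
    (∀ᵐ y ∂volume.restrict {z | N z < r}, 0 < w y ∧
      w y / 2 ≤ wtilde N μ w r y ∧ wtilde N μ w r y ≤ (1 + C) / 2 * w y) ∧
    IntegrableOn (wtilde N μ w r) {y | N y < r} := by
  have hBo : IsOpen {y | N y < r} := isOpen_lt hNc continuous_const
  set B := {y | N y < r} with hBdef
  have hBm := hBo.measurableSet
  have hwB : ∀ᵐ y ∂volume.restrict B, 0 < w y :=
    (ae_mono (Measure.restrict_mono hsub le_rfl)) hwpos
  have hres : μ.restrict B = (volume.restrict B).withDensity (fun y => ENNReal.ofReal (w y)) := by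
    rw [hμdef, restrict_withDensity hBm, Measure.restrict_restrict hBm,
      inter_eq_self_of_subset_left hsub]
  have hm0 : μ B = ∫⁻ y in B, ENNReal.ofReal (w y) := by
    rw [← Measure.restrict_apply_self, hres, withDensity_apply _ hBm,
      Measure.restrict_restrict hBm, inter_self]
  have hm : (μ B).toReal = ∫ y in B, w y := by
    rw [hm0, ← ofReal_integral_eq_lintegral_ofReal hint (hwB.mono fun _ h => h.le),
      ENNReal.toReal_ofReal (integral_nonneg_of_ae (hwB.mono fun _ h => h.le))]
  have hpos : 0 < ∫ y in B, w y := by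
    rw [integral_pos_iff_support_of_nonneg_ae (hwB.mono fun _ h => h.le) hint]
    have h1 : volume.restrict B (Function.support w) = volume.restrict B univ :=
      measure_congr (eventuallyEq_univ.2 (hwB.mono fun _ h => h.ne'))
    rw [h1, Measure.restrict_apply_univ]
    exact hBo.measure_pos _ ⟨0, by simpa [hBdef, hN0] using hr⟩
  have hbound : ∀ᵐ y ∂volume.restrict B, 0 < w y ∧
      w y / 2 ≤ wtilde N μ w r y ∧ wtilde N μ w r y ≤ (1 + C) / 2 * w y := by
    filter_upwards [hwB, hcomp] with y hy hc
    have h0 : 0 ≤ (μ B).toReal / (μ {z | N (z - y) < r}).toReal := by positivity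
    have h1 : (μ B).toReal / (μ {z | N (z - y) < r}).toReal ≤ C := by
      rcases eq_or_ne (μ {z | N (z - y) < r}) ∞ with ht | ht
      · simp [ht, hC.le]
      · have := ENNReal.toReal_mono (ENNReal.mul_ne_top ENNReal.ofReal_ne_top ht) hc
        rw [ENNReal.toReal_mul, ENNReal.toReal_ofReal hC.le] at this
        exact div_le_of_le_mul₀ ENNReal.toReal_nonneg hC.le this
    refine ⟨hy, ?_, ?_⟩ <;> unfold wtilde <;> nlinarith
  refine ⟨hres, hm, hpos, hbound, ?_⟩
  have hsf : SFinite μ := by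
    rw [hμdef]
    infer_instance
  have hmeas : Measurable fun y => μ {z | N (z - y) < r} := by
    have ho : IsOpen {p : EuclideanSpace ℝ (Fin n) × EuclideanSpace ℝ (Fin n) |
        N (p.2 - p.1) < r} :=
      isOpen_lt (hNc.comp (continuous_snd.sub continuous_fst)) continuous_const
    exact measurable_measure_prodMk_left ho.measurableSet
  have hgm : AEStronglyMeasurable (wtilde N μ w r) (volume.restrict B) := by
    have h1 : AEMeasurable w (volume.restrict B) := hint.aestronglyMeasurable.aemeasurable
    have h2 : AEMeasurable (fun y => (1 + (μ {z | N z < r}).toReal /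
        (μ {z | N (z - y) < r}).toReal)) (volume.restrict B) := by
      exact ((hmeas.ennreal_toReal.const_div _).const_add 1).aemeasurable
    exact ((h1.div_const 2).mul h2).aestronglyMeasurable
  refine Integrable.mono' (hint.const_mul ((1 + C) / 2)) hgm ?_
  filter_upwards [hbound] with y ⟨h1, h2, h3⟩
  rw [Real.norm_of_nonneg (by linarith)]
  exact h3

/-- Rewriting the SAMV operator with respect to `μ = w 𝓛ⁿ` as an integral against `w̃_r 𝓛ⁿ`. -/
theorem samv_eq {n : ℕ} (N : EuclideanSpace ℝ (Fin n) → ℝ)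
    (w : EuclideanSpace ℝ (Fin n) → ℝ) (μ : Measure (EuclideanSpace ℝ (Fin n))) {r : ℝ}
    (hint : IntegrableOn w {y | N y < r})
    (hres : μ.restrict {y | N y < r}
        = (volume.restrict {y | N y < r}).withDensity (fun y => ENNReal.ofReal (w y)))
    (hwB : ∀ᵐ y ∂volume.restrict {z | N z < r}, 0 < w y)
    (f : EuclideanSpace ℝ (Fin n) → ℝ) :
    (1 / (2 * r ^ 2)) * ⨍ y in {y | N y < r},
        f y * (1 + (μ {z | N z < r}).toReal / (μ {z | N (z - y) < r}).toReal) ∂μ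
      = ((μ {z | N z < r}).toReal * r ^ 2)⁻¹ * ∫ y in {y | N y < r}, f y * wtilde N μ w r y := by
  have h : ∫ y in {y | N y < r},
        f y * (1 + (μ {z | N z < r}).toReal / (μ {z | N (z - y) < r}).toReal) ∂μ
      = 2 * ∫ y in {y | N y < r}, f y * wtilde N μ w r y := by
    rw [hres, integral_withDensity_eq_integral_toReal_smul₀
      hint.aestronglyMeasurable.aemeasurable.ennreal_ofReal (by simp), ← integral_const_mul]
    refine integral_congr_ae ?_
    filter_upwards [hwB] with y hy
    rw [ENNReal.toReal_ofReal hy.le, smul_eq_mul]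
    unfold wtilde
    ring
  rw [setAverage_eq, h, measureReal_def, smul_eq_mul]
  field_simp

/-! ### Blow-up and the second moments of the limit measure -/

open scoped Pointwise in
/-- Blow-up: rescaling `B_1` to `B_r` turns integrals against `ν̃_r` into integrals against
`w̃_r 𝓛ⁿ` over `B_r`. Constants and quadratic forms are the relevant test functions. -/
theorem blowup {n : ℕ} (N : EuclideanSpace ℝ (Fin n) → ℝ)
    (hNc : Continuous N)
    (hN_smul : ∀ (a : ℝ) x, N (a • x) = |a| * N x)
    (F φ g : EuclideanSpace ℝ (Fin n) → ℝ) {r : ℝ} (hr : 0 < r)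
    (hφ : ∀ y, N y < 1 → F (r • y) = r ^ 2 * φ y) (m : ℝ) :
    ∫ y in {y | N y < 1}, φ y * (g (r • y) * r ^ n / m)
      = (m * r ^ 2)⁻¹ * ∫ y in {y | N y < r}, F y * g y := by
  have hset : r • {y | N y < 1} = {y | N y < r} := by
    ext y
    rw [Set.mem_smul_set_iff_inv_smul_mem₀ hr.ne']
    simp only [mem_ofPred_eq, hN_smul, abs_of_pos (inv_pos.2 hr)]
    rw [inv_mul_lt_iff₀ hr, mul_one]
  have hsc := Measure.setIntegral_comp_smul_of_pos (volume : Measure (EuclideanSpace ℝ (Fin n)))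
    (fun y => F y * g y) {y | N y < 1} hr
  rw [hset, finrank_euclideanSpace_fin] at hsc
  have hm1 : MeasurableSet {y | N y < 1} := (isOpen_lt hNc continuous_const).measurableSet
  have hcongr : ∫ y in {y | N y < 1}, φ y * (g (r • y) * r ^ n / m)
      = ∫ y in {y | N y < 1}, (r ^ n / m / r ^ 2) * (F (r • y) * g (r • y)) := by
    refine setIntegral_congr_fun hm1 fun y hy => ?_
    simp only [hφ y hy]
    field_simp
  rw [hcongr, integral_const_mul, hsc, smul_eq_mul]
  field_simp

theorem eLpNorm_sub_neg_lt_top {n : ℕ} (B : Set (EuclideanSpace ℝ (Fin n)))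
    (hB : MeasurableSet B) (hsymm : ∀ y, -y ∈ B ↔ y ∈ B)
    (g : EuclideanSpace ℝ (Fin n) → ℝ) {M : ℝ} (hg : ∀ᵐ y ∂volume.restrict B, |g y| ≤ M) :
    eLpNorm (fun y => g y - g (-y)) ∞ (volume.restrict B) < ∞ := by
  have hpre : (Neg.neg : EuclideanSpace ℝ (Fin n) → _) ⁻¹' B = B := by
    ext y
    exact hsymm y
  have hmp := (Measure.measurePreserving_neg
    (volume : Measure (EuclideanSpace ℝ (Fin n)))).restrict_preimage hB
  rw [hpre] at hmp
  have h2 := hmp.quasiMeasurePreserving.ae hg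
  rw [eLpNorm_exponent_top]
  refine eLpNormEssSup_lt_top_of_ae_bound (C := M + M) ?_
  filter_upwards [hg, h2] with y h1 h2
  exact (norm_sub_le _ _).trans (add_le_add h1 h2)

/-- A quadratic form extends from `B_1` to a bounded continuous function by radial truncation.
For a finite measure carried by `B_1`, its integral is the trace pairing with the second moments. -/
theorem trace_identity {n : ℕ} (N : EuclideanSpace ℝ (Fin n) → ℝ)
    (hNc : Continuous N) {c : ℝ} (hc : ∀ x, ‖x‖ ≤ c * N x)
    (hN_smul : ∀ (a : ℝ) x, N (a • x) = |a| * N x)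
    (νt : Measure (EuclideanSpace ℝ (Fin n))) [IsFiniteMeasure νt]
    (hνtsupp : νt {y | 1 ≤ N y} = 0) (hcpos : 0 < c)
    (Q : EuclideanSpace ℝ (Fin n) →L[ℝ] EuclideanSpace ℝ (Fin n) →L[ℝ] ℝ) :
    ∃ φ : EuclideanSpace ℝ (Fin n) → ℝ, Continuous φ ∧ (∃ M : ℝ, ∀ y, |φ y| ≤ M) ∧
      (∀ y, N y < 1 → φ y = Q y y) ∧
      ∫ y, φ y ∂νt = ∑ i : Fin n, ∑ j : Fin n, (∫ y in {y | N y < 1}, y i * y j ∂νt) *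
          Q (EuclideanSpace.single j 1) (EuclideanSpace.single i 1) := by
  let P : EuclideanSpace ℝ (Fin n) → EuclideanSpace ℝ (Fin n) := fun y => (max 1 (N y))⁻¹ • y
  have hmax : ∀ y, 0 < max 1 (N y) := fun y => lt_max_of_lt_left one_pos
  have hPc : Continuous P :=
    ((continuous_const.max hNc).inv₀ fun y => (hmax y).ne').smul continuous_id
  have hPb : ∀ y, ‖P y‖ ≤ c := by
    intro y
    refine (hc _).trans ?_
    rw [hN_smul, abs_of_pos (inv_pos.2 (hmax y))]
    have : (max 1 (N y))⁻¹ * N y ≤ 1 := by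
      rw [inv_mul_le_iff₀ (hmax y), mul_one]
      exact le_max_right _ _
    nlinarith
  have hP1 : ∀ y, N y < 1 → P y = y := by
    intro y hy
    simp [P, max_eq_left hy.le]
  have hae : ∀ᵐ y ∂νt, N y < 1 := by
    rw [ae_iff]
    simpa using hνtsupp
  have hres : νt.restrict {y | N y < 1} = νt := Measure.restrict_eq_self_of_ae_mem hae
  refine ⟨fun y => Q (P y) (P y), by fun_prop, ⟨‖Q‖ * c * c, fun y => ?_⟩,
    fun y hy => by simp only [hP1 y hy], ?_⟩
  · refine (Q.le_opNorm₂ (P y) (P y)).trans ?_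
    have := hPb y
    gcongr
  have hexp : ∀ y, Q y y = ∑ i : Fin n, ∑ j : Fin n, (y i * y j) *
      Q (EuclideanSpace.single j 1) (EuclideanSpace.single i 1) := by
    intro y
    have hy : y = ∑ i, y i • EuclideanSpace.single i (1 : ℝ) := by
      ext j
      simp [Finset.sum_apply, Pi.single_apply]
    conv_lhs => rw [hy]
    simp only [map_sum, map_smul, sum_apply, smul_apply,
      smul_eq_mul, Finset.mul_sum]
    refine Finset.sum_congr rfl fun i _ => Finset.sum_congr rfl fun j _ => ?_
    ring
  have hintg : ∀ i j : Fin n, Integrable (fun y : EuclideanSpace ℝ (Fin n) => y i * y j) νt := by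
    intro i j
    refine Integrable.of_bound (C := c * c) (by fun_prop) ?_
    filter_upwards [hae] with y hy
    have h1 : ‖y‖ ≤ c := by
      have := hPb y
      rwa [hP1 y hy] at this
    rw [norm_mul]
    exact mul_le_mul ((PiLp.norm_apply_le y i).trans h1) ((PiLp.norm_apply_le y j).trans h1)
      (norm_nonneg _) hcpos.le
  rw [hres]
  calc ∫ y, Q (P y) (P y) ∂νt = ∫ y, ∑ i : Fin n, ∑ j : Fin n, (y i * y j) *
        Q (EuclideanSpace.single j 1) (EuclideanSpace.single i 1) ∂νt := by
        refine integral_congr_ae ?_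
        filter_upwards [hae] with y hy
        rw [hP1 y hy, hexp]
    _ = _ := by
        rw [integral_finsetSum _ fun i _ => integrable_finsetSum _ fun j _ =>
          (hintg i j).mul_const _]
        refine Finset.sum_congr rfl fun i _ => ?_
        rw [integral_finsetSum _ fun j _ => (hintg i j).mul_const _]
        simp_rw [integral_mul_const]

/-! ### The pointwise SAMV Laplacian -/

/-- In the setting of Statement 16 (norm `N` on `ℝⁿ`, open `Ω ∋ 0`,
vanishing weight `w` at `0`, infinitesimally even at `0`, `μ = w 𝓛ⁿ ⌞ Ω`), assume moreover:
(a) `μ` satisfies a comparability condition at `0` (with `𝓛ⁿ`-a.e. `y ∈ B_r(0)`);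
(b) the weights `w̃_r` are (uniformly in `r`) infinitesimally even at `0`;
(c) the blow-up measures `ν̃_r = (w̃_r(r·) rⁿ / μ(B_r(0))) 𝓛ⁿ ⌞ B_1(0)` converge weakly to `ν̃`.
Then every `u` twice differentiable at `0` admits a pointwise SAMV Laplacian at `0`, equal to
`½ Tr(M_{ν̃} ∇²u(0))`. -/
theorem stmt_17 {n : ℕ} (hn : 0 < n)
    (N : EuclideanSpace ℝ (Fin n) → ℝ)
    (hN_add : ∀ x y, N (x + y) ≤ N x + N y)
    (hN_smul : ∀ (a : ℝ) x, N (a • x) = |a| * N x)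
    (hN_zero : ∀ x, N x = 0 ↔ x = 0)
    (Ω : Set (EuclideanSpace ℝ (Fin n))) (hΩ : IsOpen Ω) (h0 : (0 : EuclideanSpace ℝ (Fin n)) ∈ Ω)
    (w : EuclideanSpace ℝ (Fin n) → ℝ)
    (hwloc : LocallyIntegrableOn w Ω volume)
    (hwpos : ∀ᵐ y ∂volume.restrict Ω, 0 < w y)
    (hwbdd : ∃ V ∈ 𝓝 (0 : EuclideanSpace ℝ (Fin n)), eLpNorm w ∞ (volume.restrict V) < ∞)
    (hwleb : Tendsto (fun r : ℝ => ⨍ y in {y | N y < r}, |w y| ∂volume)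
      (𝓝[>] (0 : ℝ)) (𝓝 0))
    (hweven : Tendsto (fun r : ℝ =>
        (eLpNorm (fun y => w y - w (-y)) ∞ (volume.restrict {y | N y < r})).toReal /
          (r * ⨍ y in {y | N y < r}, w y ∂volume))
      (𝓝[>] (0 : ℝ)) (𝓝 0))
    (μ : Measure (EuclideanSpace ℝ (Fin n)))
    (hμdef : μ = (volume.restrict Ω).withDensity fun y => ENNReal.ofReal (w y))
    -- (a) comparability condition at 0
    (hcomp : ∃ r₀ C : ℝ, 0 < r₀ ∧ 0 < C ∧ ∀ r : ℝ, 0 < r → r < r₀ →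
      ∀ᵐ y ∂volume.restrict {z | N z < r},
        μ {z | N z < r} ≤ ENNReal.ofReal C * μ {z | N (z - y) < r})
    -- (b) infinitesimal evenness of the weights w̃_r
    (hweven' : Tendsto (fun r : ℝ =>
        (eLpNorm (fun y => wtilde N μ w r y - wtilde N μ w r (-y)) ∞
            (volume.restrict {y | N y < r})).toReal /
          (r * ⨍ y in {y | N y < r}, wtilde N μ w r y ∂volume))
      (𝓝[>] (0 : ℝ)) (𝓝 0))
    -- (c) weak convergence of the blow-up measures
    (νt : Measure (EuclideanSpace ℝ (Fin n)))
    (hνtsupp : νt {y | 1 ≤ N y} = 0)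
    (hνt : ∀ φ : EuclideanSpace ℝ (Fin n) → ℝ, Continuous φ → (∃ M : ℝ, ∀ y, |φ y| ≤ M) →
      Tendsto (fun r : ℝ => ∫ y in {y | N y < 1},
          φ y * (wtilde N μ w r (r • y) * r ^ n / (μ {z | N z < r}).toReal) ∂volume)
        (𝓝[>] (0 : ℝ)) (𝓝 (∫ y, φ y ∂νt)))
    (u : EuclideanSpace ℝ (Fin n) → ℝ)
    (hu1 : ∀ᶠ y in 𝓝 (0 : EuclideanSpace ℝ (Fin n)), DifferentiableAt ℝ u y)
    (hu2 : DifferentiableAt ℝ (fderiv ℝ u) 0) :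
    Tendsto (fun r : ℝ => (1 / (2 * r ^ 2)) * ⨍ y in {y | N y < r},
        (u y - u 0) * (1 + (μ {z | N z < r}).toReal / (μ {z | N (z - y) < r}).toReal) ∂μ)
      (𝓝[>] (0 : ℝ))
      (𝓝 ((1 / 2) * ∑ i : Fin n, ∑ j : Fin n,
        (∫ y in {y | N y < 1}, y i * y j ∂νt) *
          fderiv ℝ (fderiv ℝ u) 0 (EuclideanSpace.single j 1) (EuclideanSpace.single i 1))) := by
  obtain ⟨hNc, c, hc, hcN⟩ := norm_facts N hN_add hN_smul hN_zero
  have hN0 : N 0 = 0 := (hN_zero 0).2 rfl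
  obtain ⟨r₀, C, hr₀, hC, hcomp⟩ := hcomp
  obtain ⟨V, hV, hVfin⟩ := hwbdd
  set L := fderiv ℝ u 0 with hL
  set Q := fderiv ℝ (fderiv ℝ u) 0 with hQ
  set g := wtilde N μ w with hg
  have hsmall : ∀ s ∈ 𝓝 (0 : EuclideanSpace ℝ (Fin n)), ∀ᶠ r : ℝ in 𝓝[>] 0,
      {y | N y < r} ⊆ s := by
    intro s hs
    obtain ⟨δ, hδ, hsub⟩ := Metric.mem_nhds_iff.1 hs
    filter_upwards [Ioo_mem_nhdsGT (show (0 : ℝ) < δ / c by positivity)] with r hr y hy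
    refine hsub ?_
    have h1 : c * N y < c * (δ / c) := mul_lt_mul_of_pos_left (lt_trans hy hr.2) hc
    rw [mul_div_cancel₀ _ hc.ne'] at h1
    simpa using (hcN y).trans_lt h1
  have hBo : ∀ r, IsOpen {y | N y < r} := fun r => isOpen_lt hNc continuous_const
  have hBm : ∀ r, MeasurableSet {y | N y < r} := fun r => (hBo r).measurableSet
  have hNneg : ∀ y, N (-y) = N y := by
    intro y
    have := hN_smul (-1) y
    simpa using this
  have hBsymm : ∀ r y, -y ∈ {y | N y < r} ↔ y ∈ {y | N y < r} := by
    intro r y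
    simp [hNneg]
  have hnormB : ∀ r y, N y < r → ‖y‖ ≤ c * r := fun r y hy => (hcN y).trans (by gcongr)
  have hfin : ∀ r, volume {y | N y < r} < ∞ := by
    intro r
    refine (measure_mono fun y hy => ?_).trans_lt
      (measure_closedBall_lt_top (x := (0 : EuclideanSpace ℝ (Fin n))) (r := c * r))
    simpa using hnormB r y hy
  have hwint : ∀ᶠ r : ℝ in 𝓝[>] 0, IntegrableOn w {y | N y < r} := by
    have h := hwloc 0 h0
    rw [hΩ.nhdsWithin_eq h0] at h
    obtain ⟨S, hS, hSi⟩ := h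
    exact (hsmall S hS).mono fun r hr => hSi.mono_set hr
  -- All properties that hold on sufficiently small balls.
  have hgood : ∀ᶠ r : ℝ in 𝓝[>] 0, 0 < r ∧ IntegrableOn w {y | N y < r} ∧
      (μ.restrict {y | N y < r}
        = (volume.restrict {y | N y < r}).withDensity (fun y => ENNReal.ofReal (w y)) ∧
      (μ {z | N z < r}).toReal = ∫ y in {y | N y < r}, w y ∧
      0 < ∫ y in {y | N y < r}, w y ∧
      (∀ᵐ y ∂volume.restrict {z | N z < r}, 0 < w y ∧
        w y / 2 ≤ g r y ∧ g r y ≤ (1 + C) / 2 * w y) ∧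
      IntegrableOn (g r) {y | N y < r}) ∧
      eLpNorm (fun y => g r y - g r (-y)) ∞ (volume.restrict {y | N y < r}) < ∞ := by
    filter_upwards [hwint, hsmall Ω (hΩ.mem_nhds h0), hsmall V hV, Ioo_mem_nhdsGT hr₀]
      with r hr1 hr2 hr3 hr4
    have hf := wtilde_facts N hN0 hNc Ω w hwpos μ hμdef hr4.1 hC hr2 hr1 (hcomp r hr4.1 hr4.2)
    refine ⟨hr4.1, hr1, hf, ?_⟩
    have hwb : ∀ᵐ y ∂volume.restrict {y | N y < r},
        |w y| ≤ (eLpNorm w ∞ (volume.restrict V)).toReal := by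
      refine ae_mono (Measure.restrict_mono hr3 le_rfl) ?_
      have h := ae_le_eLpNormEssSup (f := w) (μ := volume.restrict V)
      rw [← eLpNorm_exponent_top] at h
      filter_upwards [h] with y hy
      simpa using ENNReal.toReal_mono hVfin.ne hy
    refine eLpNorm_sub_neg_lt_top _ (hBm r) (hBsymm r) (g r)
      (M := (1 + C) / 2 * (eLpNorm w ∞ (volume.restrict V)).toReal) ?_
    filter_upwards [hwb, hf.2.2.2.1] with y h1 h2
    obtain ⟨h2, h3, h4⟩ := h2
    rw [abs_of_pos h2] at h1
    rw [abs_of_nonneg (by linarith)]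
    exact h4.trans (by gcongr)
  -- `∫ w̃_r / μ(B_r)` stays between `1/2` and `(1 + C)/2`.
  have hmass : ∀ᶠ r : ℝ in 𝓝[>] 0, 1 / 2 * (μ {z | N z < r}).toReal ≤ ∫ y in {y | N y < r}, g r y ∧
      ∫ y in {y | N y < r}, g r y ≤ (1 + C) / 2 * (μ {z | N z < r}).toReal := by
    filter_upwards [hgood] with r ⟨hr, hwi, ⟨hres, hm, hpos, hb, hgi⟩, hK⟩
    rw [hm, ← integral_const_mul, ← integral_const_mul]
    constructor
    · refine setIntegral_mono_ae_restrict (hwi.const_mul _) hgi ?_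
      filter_upwards [hb] with y hy
      linarith [hy.2.1]
    · refine setIntegral_mono_ae_restrict hgi (hwi.const_mul _) ?_
      filter_upwards [hb] with y hy
      exact hy.2.2
  -- The limit measure has mass at least `1/2`, so its total mass is a genuine (finite) integral.
  have hνfin : IsFiniteMeasure νt := by
    have h1 := hνt (fun _ => 1) continuous_const ⟨1, by simp⟩
    have h2 : (1 : ℝ) / 2 ≤ ∫ _, (1 : ℝ) ∂νt := by
      refine ge_of_tendsto h1 ?_
      filter_upwards [hgood, hmass] with r ⟨hr, hwi, ⟨hres, hm, hpos, hb, hgi⟩, hK⟩ hma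
      have hmp : 0 < (μ {z | N z < r}).toReal := hm ▸ hpos
      rw [blowup N hNc hN_smul (fun _ => r ^ 2) (fun _ => 1) (g r) hr (by simp),
        integral_const_mul, le_inv_mul_iff₀ (by positivity)]
      nlinarith [hma.1, sq_nonneg r]
    by_contra hnf
    have h3 : ¬ Integrable (fun _ => (1 : ℝ)) νt := by
      rw [integrable_const_iff]
      simpa using hnf
    rw [integral_undef h3] at h2
    norm_num at h2
  obtain ⟨φ, hφc, hφb, hφQ, hφint⟩ := trace_identity N hNc hcN hN_smul νt hνtsupp hc Q
  rw [← hφint]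
  -- The quadratic part of the Taylor expansion.
  have hT2 : Tendsto (fun r : ℝ => ((μ {z | N z < r}).toReal * r ^ 2)⁻¹ *
      ∫ y in {y | N y < r}, Q y y * g r y) (𝓝[>] 0) (𝓝 (∫ y, φ y ∂νt)) := by
    refine (hνt φ hφc hφb).congr' ?_
    filter_upwards [self_mem_nhdsWithin] with r hr
    refine blowup N hNc hN_smul (fun y => Q y y) φ (g r) hr (fun y hy => ?_) _
    rw [hφQ y hy]
    simp only [map_smul, smul_apply, smul_eq_mul]
    ring
  -- The linear part vanishes by infinitesimal evenness of `w̃_r`.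
  have hT1 : Tendsto (fun r : ℝ => ((μ {z | N z < r}).toReal * r ^ 2)⁻¹ *
      ∫ y in {y | N y < r}, L y * g r y) (𝓝[>] 0) (𝓝 0) := by
    have hlim := (hweven'.abs).const_mul (1 / 2 * (‖L‖ * c) * ((1 + C) / 2))
    rw [abs_zero, mul_zero] at hlim
    refine squeeze_zero_norm' ?_ hlim
    filter_upwards [hgood, hmass] with r ⟨hr, hwi, ⟨hres, hm, hpos, hb, hgi⟩, hK⟩ hma
    have hmp : 0 < (μ {z | N z < r}).toReal := hm ▸ hpos
    have hodd := odd_integral_bound _ (hBm r) (hBsymm r) (hfin r) (g r) hgi hK L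
      (D := ‖L‖ * (c * r)) fun y hy => (L.le_opNorm y).trans (by
        gcongr
        exact hnormB r y hy)
    set K := (eLpNorm (fun y => g r y - g r (-y)) ∞ (volume.restrict {y | N y < r})).toReal
    have hvol : 0 < volume.real {y | N y < r} :=
      ENNReal.toReal_pos ((hBo r).measure_pos _ ⟨0, by simpa [hN0] using hr⟩).ne' (hfin r).ne
    have hGpos : 0 < ∫ y in {y | N y < r}, g r y := by linarith [hma.1]
    have hK0 : 0 ≤ K := ENNReal.toReal_nonneg
    rw [setAverage_eq, smul_eq_mul, abs_of_nonneg (by positivity), norm_mul,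
      Real.norm_of_nonneg (by positivity), Real.norm_eq_abs]
    generalize volume.real {y | N y < r} = v at *
    generalize (∫ y in {y | N y < r}, g r y) = G at *
    generalize (μ {z | N z < r}).toReal = m at *
    have hGm : G / m ≤ (1 + C) / 2 := by
      rw [div_le_iff₀ hmp]
      exact hma.2
    calc (m * r ^ 2)⁻¹ * |∫ y in {y | N y < r}, L y * g r y|
        ≤ (m * r ^ 2)⁻¹ * (1 / 2 * (‖L‖ * (c * r) * K * v)) := by gcongr
      _ = 1 / 2 * (‖L‖ * c) * (G / m) * (K / (r * (v⁻¹ * G))) := by field_simp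
      _ ≤ _ := by gcongr
  -- The Taylor remainder is negligible because `∫ w̃_r / μ(B_r)` is bounded.
  set R : EuclideanSpace ℝ (Fin n) → ℝ := fun y => u y - u 0 - L y - 1 / 2 * Q y y with hR
  have hT3 : Tendsto (fun r : ℝ => ((μ {z | N z < r}).toReal * r ^ 2)⁻¹ *
      ∫ y in {y | N y < r}, R y * g r y) (𝓝[>] 0) (𝓝 0) := by
    rw [Metric.tendsto_nhds]
    intro ε hε
    set η := ε / (c ^ 2 * (1 + C)) with hη
    have hηpos : 0 < η := by positivity
    filter_upwards [hgood, hmass, hsmall _ (taylor_two u hu1 hu2 hηpos)]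
      with r ⟨hr, hwi, ⟨hres, hm, hpos, hb, hgi⟩, hK⟩ hma htay
    have hmp : 0 < (μ {z | N z < r}).toReal := hm ▸ hpos
    have hRg : ‖∫ y in {y | N y < r}, R y * g r y‖
        ≤ ∫ y in {y | N y < r}, (η * (c * r) ^ 2) * g r y := by
      refine norm_integral_le_of_norm_le (hgi.const_mul _) ?_
      filter_upwards [hb, ae_restrict_mem (hBm r)] with y ⟨h1, h2, h3⟩ hy
      have hg0 : 0 ≤ g r y := by linarith
      rw [norm_mul, Real.norm_of_nonneg hg0]
      refine mul_le_mul_of_nonneg_right ((htay hy).trans ?_) hg0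
      have := hnormB r y hy
      gcongr
    rw [integral_const_mul] at hRg
    rw [dist_zero_right, norm_mul, Real.norm_of_nonneg (by positivity)]
    calc ((μ {z | N z < r}).toReal * r ^ 2)⁻¹ * ‖∫ y in {y | N y < r}, R y * g r y‖
        ≤ ((μ {z | N z < r}).toReal * r ^ 2)⁻¹ * ((η * (c * r) ^ 2) *
            ((1 + C) / 2 * (μ {z | N z < r}).toReal)) := by
          gcongr
          exact hRg.trans (mul_le_mul_of_nonneg_left hma.2 (by positivity))
      _ = ε / 2 := by
          rw [hη]
          field_simp
      _ < ε := by linarith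
  have hsum := (hT1.add (hT2.const_mul (1 / 2))).add hT3
  rw [zero_add, add_zero] at hsum
  refine hsum.congr' ?_
  filter_upwards [hgood, hsmall _ hu1, hsmall _ (taylor_two u hu1 hu2 one_pos)]
    with r ⟨hr, hwi, ⟨hres, hm, hpos, hb, hgi⟩, hK⟩ hdiff htay
  rw [samv_eq N w μ hwi hres (hb.mono fun y hy => hy.1) (fun y => u y - u 0)]
  have hae := ae_restrict_mem (μ := volume) (hBm r)
  have i1 : IntegrableOn (fun y => L y * g r y) {y | N y < r} := by
    refine Integrable.bdd_mul (c := ‖L‖ * (c * r)) hgi L.continuous.aestronglyMeasurable ?_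
    filter_upwards [hae] with y hy
    have := hnormB r y hy
    exact (L.le_opNorm y).trans (by gcongr)
  have i2 : IntegrableOn (fun y => Q y y * g r y) {y | N y < r} := by
    refine Integrable.bdd_mul (c := ‖Q‖ * (c * r) * (c * r)) hgi
      (Continuous.aestronglyMeasurable (by fun_prop)) ?_
    filter_upwards [hae] with y hy
    have := hnormB r y hy
    exact (Q.le_opNorm₂ y y).trans (by gcongr)
  have i3 : IntegrableOn (fun y => R y * g r y) {y | N y < r} := by
    refine Integrable.bdd_mul (c := 1 * (c * r) ^ 2) hgi ?_ ?_
    · have huc : ContinuousOn u {y | N y < r} := fun y hy =>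
        (hdiff hy : DifferentiableAt ℝ u y).continuousAt.continuousWithinAt
      refine ContinuousOn.aestronglyMeasurable ?_ (hBm r)
      have h2 : Continuous fun y => 1 / 2 * Q y y := by fun_prop
      exact ((huc.sub continuousOn_const).sub L.continuous.continuousOn).sub h2.continuousOn
    · filter_upwards [hae] with y hy
      have := hnormB r y hy
      exact (htay hy).trans (by gcongr)
  have i12 : IntegrableOn (fun y => L y * g r y + 1 / 2 * (Q y y * g r y)) {y | N y < r} :=
    i1.add (i2.const_mul _)
  have hsplit : ∫ y in {y | N y < r}, (u y - u 0) * g r y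
      = (∫ y in {y | N y < r}, L y * g r y) + 1 / 2 * (∫ y in {y | N y < r}, Q y y * g r y)
        + ∫ y in {y | N y < r}, R y * g r y := by
    rw [← integral_const_mul, ← integral_add i1 (i2.const_mul _),
      ← integral_add i12 i3]
    refine integral_congr_ae (Eventually.of_forall fun y => ?_)
    simp only [hR]
    ring
  rw [hsplit]
  ring
end
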